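/- arXiv:1909.10943 — 4 statements merged into one kernel-verified Lean document; each statement's English description precedes it below -/
import Mathlib

section
/- Let X and Y be two nonnegative random variables such that for each positive x one has x·P(X > x) ≤ E[Y·1{X ≥ x}]. Then for each t > 0, P(X > 2t) ≤ ∫_1^∞ P(Y > s·t) ds. -/
open MeasureTheory ENNReal

/-!
Splitting `Y ≤ t + (Y - t)⁺` in the weak-type inequality gives, for every `x > a`,
`x P(X > x) ≤ t P(X ≥ x) + E[(Y - t)⁺] ≤ t P(X > a) + E[(Y - t)⁺]`.
Letting `x` decrease to `a` turns the left side into `a P(X > a)`, and since `P(X > a)` is finite it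
can be absorbed: `(a - t) P(X > a) ≤ E[(Y - t)⁺]`. The layer-cake formula rewrites the right side
as `t ∫_1^∞ P(Y > s t) ds`.
-/

section

variable {Ω : Type*} [MeasurableSpace Ω] {μ : Measure Ω}

theorem measure_lt_eq_iSup_gt {α : Type*} [LinearOrder α] [TopologicalSpace α] [OrderTopology α]
    [DenselyOrdered α] [NoMaxOrder α] [FirstCountableTopology α] (X : Ω → α) (a : α) :
    μ {ω | a < X ω} = ⨆ x > a, μ {ω | x < X ω} := by
  obtain ⟨u, hu_anti, hu_gt, hu_lim⟩ := exists_seq_strictAnti_tendsto a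
  have hunion : {ω | a < X ω} = ⋃ n, {ω | u n < X ω} := by
    ext ω
    simp only [Set.mem_ofPred_eq, Set.mem_iUnion]
    exact ⟨fun hω => (hu_lim.eventually_lt_const hω).exists, fun ⟨n, hn⟩ => (hu_gt n).trans hn⟩
  have hmono : Monotone fun n => {ω | u n < X ω} :=
    fun _ _ hmn _ hω => (hu_anti.antitone hmn).trans_lt hω
  apply le_antisymm
  · rw [hunion, hmono.measure_iUnion]
    exact iSup_le fun n => le_iSup₂_of_le (u n) (hu_gt n) le_rfl
  · exact iSup₂_le fun x hx => measure_mono fun _ hω => hx.trans hω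

theorem setLIntegral_le_mul_measure_add_lintegral_sub (g : Ω → ℝ≥0∞) (s : Set Ω) (b : ℝ≥0∞) :
    ∫⁻ ω in s, g ω ∂μ ≤ b * μ s + ∫⁻ ω, (g ω - b) ∂μ :=
  calc ∫⁻ ω in s, g ω ∂μ ≤ ∫⁻ ω in s, (b + (g ω - b)) ∂μ := lintegral_mono fun _ => le_add_tsub
    _ = b * μ s + ∫⁻ ω in s, (g ω - b) ∂μ := by
      rw [lintegral_add_left measurable_const, setLIntegral_const]
    _ ≤ b * μ s + ∫⁻ ω, (g ω - b) ∂μ := by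
      gcongr
      exact Measure.restrict_le_self

theorem sub_mul_measure_lt_le_lintegral_sub {X : Ω → ℝ} {g : Ω → ℝ≥0∞} {a : ℝ}
    (hfin : μ {ω | a < X ω} ≠ ∞)
    (hweak : ∀ x, a < x →
      ENNReal.ofReal x * μ {ω | x < X ω} ≤ ∫⁻ ω in {ω | x ≤ X ω}, g ω ∂μ) (b : ℝ≥0∞) :
    (ENNReal.ofReal a - b) * μ {ω | a < X ω} ≤ ∫⁻ ω, (g ω - b) ∂μ := by
  have hbound : ∀ x, a < x → ENNReal.ofReal a * μ {ω | x < X ω} ≤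
      b * μ {ω | a < X ω} + ∫⁻ ω, (g ω - b) ∂μ := fun x hx =>
    calc ENNReal.ofReal a * μ {ω | x < X ω} ≤ ENNReal.ofReal x * μ {ω | x < X ω} := by gcongr
      _ ≤ ∫⁻ ω in {ω | x ≤ X ω}, g ω ∂μ := hweak x hx
      _ ≤ b * μ {ω | x ≤ X ω} + ∫⁻ ω, (g ω - b) ∂μ :=
        setLIntegral_le_mul_measure_add_lintegral_sub g _ b
      _ ≤ b * μ {ω | a < X ω} + ∫⁻ ω, (g ω - b) ∂μ := by
        gcongr
  rw [ENNReal.sub_mul fun _ _ => hfin, tsub_le_iff_left]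
  conv_lhs => rw [measure_lt_eq_iSup_gt]
  simp only [ENNReal.mul_iSup]
  exact iSup₂_le hbound

theorem lintegral_ofReal_sub_eq_lintegral_Ioi_measure_lt {Z : Ω → ℝ} (hZ : AEMeasurable Z μ)
    (a : ℝ) :
    ∫⁻ ω, ENNReal.ofReal (Z ω - a) ∂μ = ∫⁻ s in Set.Ioi a, μ {ω | s < Z ω} :=
  calc ∫⁻ ω, ENNReal.ofReal (Z ω - a) ∂μ = ∫⁻ ω, ENNReal.ofReal (max (Z ω - a) 0) ∂μ := by
        simp only [ENNReal.ofReal_max, ENNReal.ofReal_zero, max_zero]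
    _ = ∫⁻ s in Set.Ioi 0, μ {ω | s < max (Z ω - a) 0} :=
      lintegral_eq_lintegral_meas_lt μ (.of_forall fun _ => le_max_right _ _)
        ((hZ.sub_const a).max aemeasurable_const)
    _ = ∫⁻ s in Set.Ioi 0, μ {ω | s + a < Z ω} :=
      setLIntegral_congr_fun measurableSet_Ioi fun s (hs : 0 < s) => by
        simp only [lt_max_iff, hs.not_gt, or_false, lt_sub_iff_add_lt]
    _ = ∫⁻ s in Set.Ioi a, μ {ω | s < Z ω} := by
      rw [← (measurePreserving_add_right volume a).setLIntegral_comp_preimage_emb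
        (measurableEmbedding_addRight a) (fun s => μ {ω | s < Z ω}), Set.preimage_add_const_Ioi,
        sub_self]

theorem lintegral_ofReal_sub_eq_mul_lintegral_Ioi_measure_mul_lt {Y : Ω → ℝ}
    (hY : AEMeasurable Y μ) {t : ℝ} (ht : 0 < t) :
    ∫⁻ ω, ENNReal.ofReal (Y ω - t) ∂μ =
      ENNReal.ofReal t * ∫⁻ s in Set.Ioi (1 : ℝ), μ {ω | s * t < Y ω} := by
  have hscale : ∀ ω, ENNReal.ofReal (Y ω - t) =
      ENNReal.ofReal t * ENNReal.ofReal (Y ω / t - 1) := fun ω => by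
    rw [← ENNReal.ofReal_mul ht.le, mul_sub, mul_div_cancel₀ _ ht.ne', mul_one]
  simp only [hscale, lintegral_const_mul' _ _ ENNReal.ofReal_ne_top, ← lt_div_iff₀ ht,
    lintegral_ofReal_sub_eq_lintegral_Ioi_measure_lt (hY.div_const t)]

theorem tail_bound_of_weak_type_general {X Y : Ω → ℝ} (hY : AEMeasurable Y μ) {c t : ℝ}
    (ht : 0 < t) (hfin : μ {ω | c * t < X ω} ≠ ∞)
    (hweak : ∀ x, c * t < x →
      ENNReal.ofReal x * μ {ω | x < X ω} ≤ ∫⁻ ω in {ω | x ≤ X ω}, ENNReal.ofReal (Y ω) ∂μ) :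
    ENNReal.ofReal (c - 1) * μ {ω | c * t < X ω} ≤
      ∫⁻ s in Set.Ioi (1 : ℝ), μ {ω | s * t < Y ω} := by
  rw [← ENNReal.mul_le_mul_iff_right (ENNReal.ofReal_pos.2 ht).ne' ENNReal.ofReal_ne_top]
  calc ENNReal.ofReal t * (ENNReal.ofReal (c - 1) * μ {ω | c * t < X ω})
      = (ENNReal.ofReal (c * t) - ENNReal.ofReal t) * μ {ω | c * t < X ω} := by
        rw [← mul_assoc, ← ENNReal.ofReal_mul ht.le, ← ENNReal.ofReal_sub _ ht.le, mul_sub,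
          mul_one, mul_comm t c]
    _ ≤ ∫⁻ ω, (ENNReal.ofReal (Y ω) - ENNReal.ofReal t) ∂μ :=
        sub_mul_measure_lt_le_lintegral_sub hfin hweak _
    _ = ∫⁻ ω, ENNReal.ofReal (Y ω - t) ∂μ := by simp only [ENNReal.ofReal_sub _ ht.le]
    _ = ENNReal.ofReal t * ∫⁻ s in Set.Ioi (1 : ℝ), μ {ω | s * t < Y ω} :=
        lintegral_ofReal_sub_eq_mul_lintegral_Ioi_measure_mul_lt hY ht

end

/-- Weak-type lemma: if `x P(X > x) ≤ E[Y 1_{X ≥ x}]` for all `x > 0`, then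
`P(X > 2t) ≤ ∫_1^∞ P(Y > s t) ds` for all `t > 0`. -/
theorem tail_bound_of_weak_type
    {Ω : Type*} [MeasurableSpace Ω] (μ : Measure Ω) [IsProbabilityMeasure μ]
    (X Y : Ω → ℝ) (hX : Measurable X) (hY : Measurable Y)
    (hXpos : ∀ ω, 0 ≤ X ω) (hYpos : ∀ ω, 0 ≤ Y ω)
    (hweak : ∀ x : ℝ, 0 < x →
      ENNReal.ofReal x * μ {ω | x < X ω} ≤ ∫⁻ ω in {ω | x ≤ X ω}, ENNReal.ofReal (Y ω) ∂μ)
    (t : ℝ) (ht : 0 < t) :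
    μ {ω | 2 * t < X ω} ≤ ∫⁻ s in Set.Ioi (1 : ℝ), μ {ω | s * t < Y ω} := by
  simpa only [show (2 : ℝ) - 1 = 1 by norm_num, ENNReal.ofReal_one, one_mul] using
    tail_bound_of_weak_type_general hY.aemeasurable ht (measure_ne_top μ _) fun x hx =>
      hweak x ((mul_pos two_pos ht).trans hx)
end

section
/- Let (Y_i)_{i∈ℤ^d} be a strictly stationary random field of nonnegative random variables. Then for all y > 0, P( sup_{n∈ℕ^d} (1/|n|) Σ_{1 ≼ i ≼ n} Y_i > y ) ≤ ∫_1^∞ P( Y_1 > y·u·2^{−d} ) (log u)^{d−1} du. -/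
open MeasureTheory ProbabilityTheory ENNReal

/-!
On the path space `ℤ^d → ℝ` the shifts preserve the law of a stationary field, and the average over
a rectangle is an iterated ergodic average of `x ↦ x 1` along the `d` coordinate shifts. Hence the
supremum over all rectangles is at most the composition of `d` one-dimensional maximal operators.

For one operator `M`, the weak type inequality applied to `(g - y / 2)⁺` gives
`ν {M g > y} ≤ (2 / y) ∫ (g - y / 2)⁺ dν = ∫_1^∞ ν {g > y u / 2} du`. Iterating `d` times gives the
integral of `ν {g > y u₁ ⋯ u_d / 2 ^ d}` over `(1, ∞) ^ d`, and the image of Lebesgue measure on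
this set under `u ↦ u₁ ⋯ u_d` has density `(log w) ^ (d - 1) / (d - 1)!`.
-/

/-- The maximal function of the ergodic averages of `g` along the orbits of `T`. The junk term
`n = 0` equals `∞ * 0 = 0` and does not affect the supremum. -/
noncomputable def ergodicMax {X : Type*} (T : X → X) (g : X → ℝ≥0∞) (x : X) : ℝ≥0∞ :=
  ⨆ n : ℕ, (n : ℝ≥0∞)⁻¹ * birkhoffSum T g n x

/-- The points at which one of the first `N` ergodic averages of `g` is at least `c`. They
increase with `N` to a set containing `{x | c < ergodicMax T g x}`. The condition is multiplied out
by the length `n` of the average to avoid division. -/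
def ergodicLevelSet {X : Type*} (T : X → X) (g : X → ℝ≥0∞) (c : ℝ≥0∞) (N : ℕ) : Set X :=
  {x | ∃ n ∈ Finset.Icc 1 N, n * c ≤ birkhoffSum T g n x}

section ErgodicMax

variable {X : Type*} {T : X → X} {g : X → ℝ≥0∞}

theorem birkhoffSum_mono_length (T : X → X) (g : X → ℝ≥0∞) (x : X) :
    Monotone fun n => birkhoffSum T g n x :=
  fun _ _ h => Finset.sum_le_sum_of_subset (Finset.range_mono h)

theorem birkhoffSum_le_mul {c : ℝ≥0∞} (hg : ∀ x, g x ≤ c) (n : ℕ) (x : X) :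
    birkhoffSum T g n x ≤ n * c := by
  simpa [birkhoffSum] using Finset.sum_le_card_nsmul (Finset.range n) _ c fun j _ => hg (T^[j] x)

theorem monotone_ergodicLevelSet (T : X → X) (g : X → ℝ≥0∞) (c : ℝ≥0∞) :
    Monotone (ergodicLevelSet T g c) :=
  fun _ _ hNM _ ⟨n, hn, hx⟩ => ⟨n, Finset.Icc_subset_Icc_right hNM hn, hx⟩

theorem setOf_lt_ergodicMax_subset_iUnion_ergodicLevelSet (T : X → X) (g : X → ℝ≥0∞) (c : ℝ≥0∞) :
    {x | c < ergodicMax T g x} ⊆ ⋃ N, ergodicLevelSet T g c N := by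
  intro x hx
  obtain ⟨n, hn⟩ := lt_iSup_iff.1 (show c < ergodicMax T g x from hx)
  have hn0 : n ≠ 0 := by
    rintro rfl
    simp at hn
  refine Set.mem_iUnion.2 ⟨n, n, Finset.mem_Icc.2 ⟨Nat.one_le_iff_ne_zero.2 hn0, le_rfl⟩, ?_⟩
  calc n * c ≤ n * ((n : ℝ≥0∞)⁻¹ * birkhoffSum T g n x) := by gcongr
    _ = birkhoffSum T g n x :=
      ENNReal.mul_inv_cancel_left (Nat.cast_ne_zero.2 hn0) (natCast_ne_top n)

theorem birkhoffSum_indicator_ergodicLevelSet_le (T : X → X) (g : X → ℝ≥0∞) (c : ℝ≥0∞) (N L : ℕ)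
    (x : X) :
    birkhoffSum T ((ergodicLevelSet T g c N).indicator fun _ => c) L x ≤
      birkhoffSum T g (L + N) x := by
  -- A rising sun argument: an orbit segment starting in the level set is cut off after the `n`
  -- steps over which the average is at least `c`, one starting outside of it after a single step.
  set φ : X → ℝ≥0∞ := (ergodicLevelSet T g c N).indicator fun _ => c with hφ
  have hφc (n : ℕ) (z : X) : birkhoffSum T φ n z ≤ n * c :=
    birkhoffSum_le_mul (Set.indicator_le_self _ _) n z
  induction L using Nat.strong_induction_on generalizing x with
  | _ L ih =>
    by_cases hx : x ∈ ergodicLevelSet T g c N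
    · obtain ⟨n, hn, hnx⟩ := hx
      obtain ⟨hn1, hnN⟩ := Finset.mem_Icc.1 hn
      rcases le_total L n with hLn | hnL
      · calc birkhoffSum T φ L x ≤ birkhoffSum T φ n x := birkhoffSum_mono_length T φ x hLn
          _ ≤ birkhoffSum T g n x := (hφc n x).trans hnx
          _ ≤ birkhoffSum T g (L + N) x := birkhoffSum_mono_length T g x (by omega)
      · obtain ⟨K, rfl⟩ := Nat.exists_eq_add_of_le hnL
        rw [add_assoc, birkhoffSum_add, birkhoffSum_add]
        exact add_le_add ((hφc n x).trans hnx) (ih K (by omega) _)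
    · cases L with
      | zero => simp
      | succ K =>
        calc birkhoffSum T φ (K + 1) x = birkhoffSum T φ K (T x) := by
              rw [birkhoffSum_succ', hφ, Set.indicator_of_notMem hx, zero_add]
          _ ≤ birkhoffSum T g (K + N) (T x) := ih K (by omega) _
          _ ≤ birkhoffSum T g (K + 1 + N) x := by
              rw [add_right_comm, birkhoffSum_succ']
              exact le_add_self

theorem le_of_forall_natCast_mul_le_natCast_add_mul {a b : ℝ≥0∞} (N : ℕ)
    (h : ∀ L : ℕ, L * a ≤ (L + N : ℕ) * b) : a ≤ b := by
  rcases eq_or_ne b ∞ with rfl | hb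
  · exact le_top
  have hlim : Filter.Tendsto (fun L : ℕ => b + N * b / L) Filter.atTop (nhds b) := by
    simpa using tendsto_const_nhds.add (ENNReal.Tendsto.const_div tendsto_nat_nhds_top
      (.inr (ENNReal.mul_ne_top (natCast_ne_top N) hb)))
  refine ge_of_tendsto hlim ((Filter.eventually_gt_atTop 0).mono fun L hL => ?_)
  have hL0 : (L : ℝ≥0∞) ≠ 0 := Nat.cast_ne_zero.2 hL.ne'
  rw [← ENNReal.mul_le_mul_iff_right hL0 (natCast_ne_top L), mul_add,
    ENNReal.mul_div_cancel hL0 (natCast_ne_top L), ← add_mul]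
  exact_mod_cast h L

theorem birkhoffSum_le_birkhoffSum_tsub_add (T : X → X) (g : X → ℝ≥0∞) (c : ℝ≥0∞) (n : ℕ) (x : X) :
    birkhoffSum T g n x ≤ birkhoffSum T (fun z => g z - c) n x + n * c := by
  calc birkhoffSum T g n x
      ≤ ∑ j ∈ Finset.range n, ((g (T^[j] x) - c) + c) := Finset.sum_le_sum fun _ _ => le_tsub_add
    _ = birkhoffSum T (fun z => g z - c) n x + n * c := by
        simp [Finset.sum_add_distrib, birkhoffSum]

theorem ergodicMax_le_ergodicMax_tsub_add (T : X → X) (g : X → ℝ≥0∞) (c : ℝ≥0∞) (x : X) :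
    ergodicMax T g x ≤ ergodicMax T (fun z => g z - c) x + c := by
  refine iSup_le fun n => ?_
  calc (n : ℝ≥0∞)⁻¹ * birkhoffSum T g n x
      ≤ (n : ℝ≥0∞)⁻¹ * (birkhoffSum T (fun z => g z - c) n x + n * c) := by
        gcongr
        exact birkhoffSum_le_birkhoffSum_tsub_add T g c n x
    _ = (n : ℝ≥0∞)⁻¹ * birkhoffSum T (fun z => g z - c) n x + (n : ℝ≥0∞)⁻¹ * n * c := by
        rw [mul_add, mul_assoc]
    _ ≤ ergodicMax T (fun z => g z - c) x + c :=
        add_le_add (le_iSup (fun n : ℕ => (n : ℝ≥0∞)⁻¹ * birkhoffSum T (fun z => g z - c) n x) n)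
          (mul_le_of_le_one_left' (ENNReal.inv_mul_le_one _))

theorem tsub_ofReal_eq_mul_volume {c : ℝ} (hc : 0 < c) (t : ℝ≥0∞) :
    t - ENNReal.ofReal c =
      ENNReal.ofReal c * volume.restrict (Set.Ioi 1) {u : ℝ | ENNReal.ofReal (c * u) < t} := by
  rw [Measure.restrict_apply (measurableSet_lt (by fun_prop) measurable_const)]
  induction t with
  | top => simp [Set.inter_comm, hc]
  | coe t =>
    have hIoo : {u : ℝ | ENNReal.ofReal (c * u) < t} ∩ Set.Ioi 1 = Set.Ioo 1 (t / c) := by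
      ext u
      simp only [Set.mem_inter_iff, Set.mem_ofPred_eq, Set.mem_Ioi, Set.mem_Ioo, lt_div_iff₀ hc]
      rw [and_comm]
      refine and_congr_right fun hu => ?_
      rw [← ENNReal.ofReal_coe_nnreal, ENNReal.ofReal_lt_ofReal_iff_of_nonneg (by positivity),
        mul_comm]
    rw [hIoo, Real.volume_Ioo, ← ENNReal.ofReal_mul hc.le, ← ENNReal.ofReal_coe_nnreal,
      ← ENNReal.ofReal_sub _ hc.le]
    congr 1
    field_simp

section Measure

variable [MeasurableSpace X] {ν : Measure X}

theorem measurable_birkhoffSum (hT : Measurable T) (hg : Measurable g) (n : ℕ) :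
    Measurable (birkhoffSum T g n) :=
  Finset.measurable_sum _ fun j _ => hg.comp (hT.iterate j)

theorem measurable_ergodicMax (hT : Measurable T) (hg : Measurable g) :
    Measurable (ergodicMax T g) :=
  .iSup fun n => (measurable_birkhoffSum hT hg n).const_mul _

theorem measurableSet_ergodicLevelSet (hT : Measurable T) (hg : Measurable g) (c : ℝ≥0∞) (N : ℕ) :
    MeasurableSet (ergodicLevelSet T g c N) := by
  have hunion : ergodicLevelSet T g c N =
      ⋃ n ∈ Finset.Icc 1 N, {x | n * c ≤ birkhoffSum T g n x} := by
    ext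
    simp [ergodicLevelSet]
  rw [hunion]
  exact Finset.measurableSet_biUnion _ fun n _ =>
    measurableSet_le measurable_const (measurable_birkhoffSum hT hg n)

theorem lintegral_birkhoffSum (hT : MeasurePreserving T ν ν) (hg : Measurable g) (n : ℕ) :
    ∫⁻ x, birkhoffSum T g n x ∂ν = n * ∫⁻ x, g x ∂ν := by
  simp only [birkhoffSum]
  rw [lintegral_finsetSum _ fun j _ => by exact hg.comp (hT.measurable.iterate j)]
  simp [(hT.iterate _).lintegral_comp hg]

theorem mul_measure_ergodicLevelSet_le (hT : MeasurePreserving T ν ν) (hg : Measurable g)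
    (c : ℝ≥0∞) (N : ℕ) : c * ν (ergodicLevelSet T g c N) ≤ ∫⁻ x, g x ∂ν := by
  have hA := measurableSet_ergodicLevelSet hT.measurable hg c N
  refine le_of_forall_natCast_mul_le_natCast_add_mul N fun L => ?_
  rw [← lintegral_indicator_const hA, ← lintegral_birkhoffSum hT (measurable_const.indicator hA),
    ← lintegral_birkhoffSum hT hg]
  exact lintegral_mono (birkhoffSum_indicator_ergodicLevelSet_le T g c N L)

theorem mul_measure_lt_ergodicMax_le (hT : MeasurePreserving T ν ν) (hg : Measurable g)
    (c : ℝ≥0∞) : c * ν {x | c < ergodicMax T g x} ≤ ∫⁻ x, g x ∂ν := by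
  calc c * ν {x | c < ergodicMax T g x} ≤ c * ν (⋃ N, ergodicLevelSet T g c N) := by
        gcongr
        exact setOf_lt_ergodicMax_subset_iUnion_ergodicLevelSet T g c
    _ = ⨆ N, c * ν (ergodicLevelSet T g c N) := by
        rw [(monotone_ergodicLevelSet T g c).measure_iUnion, ENNReal.mul_iSup]
    _ ≤ ∫⁻ x, g x ∂ν := iSup_le (mul_measure_ergodicLevelSet_le hT hg c)

theorem lintegral_tsub_ofReal_eq_mul_lintegral_measure [SFinite ν] (hg : Measurable g) {c : ℝ}
    (hc : 0 < c) :
    ∫⁻ x, (g x - ENNReal.ofReal c) ∂ν =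
      ENNReal.ofReal c * ∫⁻ u in Set.Ioi (1 : ℝ), ν {x | ENNReal.ofReal (c * u) < g x} := by
  have hS : MeasurableSet {p : X × ℝ | ENNReal.ofReal (c * p.2) < g p.1} :=
    measurableSet_lt (by fun_prop) (by fun_prop)
  simp_rw [tsub_ofReal_eq_mul_volume hc]
  rw [lintegral_const_mul' _ _ ENNReal.ofReal_ne_top]
  congr 1
  exact (Measure.prod_apply hS).symm.trans (Measure.prod_apply_symm hS)

theorem measure_lt_ergodicMax_le_lintegral [SFinite ν] (hT : MeasurePreserving T ν ν)
    (hg : Measurable g) {y : ℝ} (hy : 0 < y) :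
    ν {x | ENNReal.ofReal y < ergodicMax T g x} ≤
      ∫⁻ u in Set.Ioi (1 : ℝ), ν {x | ENNReal.ofReal (y / 2 * u) < g x} := by
  have hy2 : 0 < y / 2 := half_pos hy
  set c := ENNReal.ofReal (y / 2) with hc
  have hyc : ENNReal.ofReal y = c + c := by
    rw [hc, ← ENNReal.ofReal_add hy2.le hy2.le, add_halves]
  have hsub : {x | ENNReal.ofReal y < ergodicMax T g x} ⊆
      {x | c < ergodicMax T (fun z => g z - c) x} := fun x hx =>
    lt_of_add_lt_add_right <| hyc.symm.trans_lt <|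
      lt_of_lt_of_le hx (ergodicMax_le_ergodicMax_tsub_add T g c x)
  rw [← ENNReal.mul_le_mul_iff_right (ENNReal.ofReal_pos.2 hy2).ne' ENNReal.ofReal_ne_top]
  calc c * ν {x | ENNReal.ofReal y < ergodicMax T g x}
      ≤ c * ν {x | c < ergodicMax T (fun z => g z - c) x} := by gcongr
    _ ≤ ∫⁻ x, (g x - c) ∂ν := mul_measure_lt_ergodicMax_le hT (hg.sub_const c) c
    _ = c * ∫⁻ u in Set.Ioi (1 : ℝ), ν {x | ENNReal.ofReal (y / 2 * u) < g x} :=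
      lintegral_tsub_ofReal_eq_mul_lintegral_measure hg hy2

end Measure

end ErgodicMax

section MultiplicativeConvolution

theorem setLIntegral_Ioi_comp_mul_right {F : ℝ → ℝ≥0∞} (hF : Measurable F) (a : ℝ) {v : ℝ}
    (hv : 0 < v) :
    ∫⁻ u in Set.Ioi a, F (u * v) = ENNReal.ofReal v⁻¹ * ∫⁻ w in Set.Ioi (a * v), F w := by
  have hpre : (· * v) ⁻¹' Set.Ioi (a * v) = Set.Ioi a := by
    rw [Set.preimage_mul_const_Ioi₀ _ hv, mul_div_cancel_right₀ _ hv.ne']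
  rw [← smul_eq_mul, ← lintegral_smul_measure, ← Measure.restrict_smul, ← abs_of_pos (inv_pos.2 hv),
    ← Real.map_volume_mul_right hv.ne', setLIntegral_map measurableSet_Ioi hF (by fun_prop), hpre]

theorem setLIntegral_Ioi_Ioi_swap {f : ℝ → ℝ → ℝ≥0∞} (hf : Measurable (Function.uncurry f))
    (a : ℝ) :
    ∫⁻ v in Set.Ioi a, ∫⁻ w in Set.Ioi v, f v w =
      ∫⁻ w in Set.Ioi a, ∫⁻ v in Set.Ioo a w, f v w := by
  have hind : Measurable ({p : ℝ × ℝ | p.1 < p.2}.indicator (Function.uncurry f)) :=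
    hf.indicator (measurableSet_lt measurable_fst measurable_snd)
  calc ∫⁻ v in Set.Ioi a, ∫⁻ w in Set.Ioi v, f v w
      = ∫⁻ v in Set.Ioi a, ∫⁻ w in Set.Ioi a,
          {p : ℝ × ℝ | p.1 < p.2}.indicator (Function.uncurry f) (v, w) := by
        refine setLIntegral_congr_fun measurableSet_Ioi fun v (hv : a < v) => ?_
        rw [← Set.inter_eq_left.2 (Set.Ioi_subset_Ioi hv.le),
          ← setLIntegral_indicator measurableSet_Ioi]
        rfl
    _ = ∫⁻ w in Set.Ioi a, ∫⁻ v in Set.Ioi a,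
          {p : ℝ × ℝ | p.1 < p.2}.indicator (Function.uncurry f) (v, w) :=
        lintegral_lintegral_swap hind.aemeasurable
    _ = ∫⁻ w in Set.Ioi a, ∫⁻ v in Set.Ioo a w, f v w := by
        refine lintegral_congr fun w => ?_
        rw [← Set.Iio_inter_Ioi, ← setLIntegral_indicator measurableSet_Iio]
        rfl

theorem lintegral_lintegral_mul_comp_mul {h F : ℝ → ℝ≥0∞} (hh : Measurable h) (hF : Measurable F) :
    ∫⁻ u in Set.Ioi (1 : ℝ), ∫⁻ v in Set.Ioi (1 : ℝ), h v * F (u * v) =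
      ∫⁻ w in Set.Ioi (1 : ℝ), (∫⁻ v in Set.Ioo 1 w, h v * ENNReal.ofReal v⁻¹) * F w := by
  calc ∫⁻ u in Set.Ioi (1 : ℝ), ∫⁻ v in Set.Ioi (1 : ℝ), h v * F (u * v)
      = ∫⁻ v in Set.Ioi (1 : ℝ), ∫⁻ u in Set.Ioi (1 : ℝ), h v * F (u * v) :=
        lintegral_lintegral_swap (by fun_prop)
    _ = ∫⁻ v in Set.Ioi (1 : ℝ), ∫⁻ w in Set.Ioi v, h v * ENNReal.ofReal v⁻¹ * F w := by
        refine setLIntegral_congr_fun measurableSet_Ioi fun v (hv : 1 < v) => ?_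
        rw [lintegral_const_mul _ (by fun_prop),
          setLIntegral_Ioi_comp_mul_right hF 1 (zero_lt_one.trans hv), one_mul, ← mul_assoc,
          lintegral_const_mul _ hF]
    _ = ∫⁻ w in Set.Ioi (1 : ℝ), ∫⁻ v in Set.Ioo 1 w, h v * ENNReal.ofReal v⁻¹ * F w :=
        setLIntegral_Ioi_Ioi_swap (by fun_prop) 1
    _ = ∫⁻ w in Set.Ioi (1 : ℝ), (∫⁻ v in Set.Ioo 1 w, h v * ENNReal.ofReal v⁻¹) * F w :=
        lintegral_congr fun w => lintegral_mul_const _ (by fun_prop)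

theorem hasDerivAt_log_pow_div_factorial (k : ℕ) {v : ℝ} (hv : v ≠ 0) :
    HasDerivAt (fun v => Real.log v ^ (k + 1) / (k + 1).factorial)
      (Real.log v ^ k / k.factorial * v⁻¹) v := by
  refine (((Real.hasDerivAt_log hv).fun_pow (k + 1)).div_const _).congr_deriv ?_
  rw [Nat.factorial_succ, add_tsub_cancel_right]
  push_cast
  field_simp

theorem log_pow_div_factorial_le_log_pow (k : ℕ) {v : ℝ} (hv : 1 ≤ v) :
    Real.log v ^ k / k.factorial ≤ Real.log v ^ k :=
  div_le_self (pow_nonneg (Real.log_nonneg hv) k) (Nat.one_le_cast.2 k.factorial_pos)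

theorem setLIntegral_Ioo_log_pow_div_factorial_mul_inv (k : ℕ) {w : ℝ} (hw : 1 ≤ w) :
    ∫⁻ v in Set.Ioo 1 w, ENNReal.ofReal (Real.log v ^ k / k.factorial) * ENNReal.ofReal v⁻¹ =
      ENNReal.ofReal (Real.log w ^ (k + 1) / (k + 1).factorial) := by
  set f : ℝ → ℝ := fun v => Real.log v ^ k / k.factorial * v⁻¹
  have hpos : ∀ v ∈ Set.uIcc 1 w, v ≠ 0 := fun v hv =>
    (zero_lt_one.trans_le (Set.uIcc_of_le hw ▸ hv).1).ne'
  have hint : IntervalIntegrable f volume 1 w :=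
    ContinuousOn.intervalIntegrable <|
      ((Real.continuousOn_log.mono hpos).pow k |>.div_const _).mul (continuousOn_inv₀.mono hpos)
  have hlog : ∀ v ∈ Set.Ioc 1 w, 0 ≤ Real.log v ^ k / k.factorial := fun v hv =>
    div_nonneg (pow_nonneg (Real.log_nonneg hv.1.le) k) (Nat.cast_nonneg _)
  have hf : 0 ≤ᵐ[volume.restrict (Set.Ioc 1 w)] f :=
    (ae_restrict_mem measurableSet_Ioc).mono fun v hv =>
      mul_nonneg (hlog v hv) (inv_nonneg.2 (zero_le_one.trans hv.1.le))
  calc ∫⁻ v in Set.Ioo 1 w, ENNReal.ofReal (Real.log v ^ k / k.factorial) * ENNReal.ofReal v⁻¹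
      = ∫⁻ v in Set.Ioc 1 w, ENNReal.ofReal (f v) := by
        rw [setLIntegral_congr Ioo_ae_eq_Ioc]
        exact setLIntegral_congr_fun measurableSet_Ioc fun v hv =>
          (ENNReal.ofReal_mul (hlog v hv)).symm
    _ = ENNReal.ofReal (∫ v in (1)..w, f v) := by
        rw [intervalIntegral.integral_of_le hw, ofReal_integral_eq_lintegral_ofReal
          ((intervalIntegrable_iff_integrableOn_Ioc_of_le hw).1 hint) hf]
    _ = ENNReal.ofReal (Real.log w ^ (k + 1) / (k + 1).factorial) := by
        rw [intervalIntegral.integral_eq_sub_of_hasDerivAt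
          (fun v hv => hasDerivAt_log_pow_div_factorial k (hpos v hv)) hint]
        simp

theorem lintegral_lintegral_log_pow_div_factorial_mul {F : ℝ → ℝ≥0∞} (hF : Measurable F) (k : ℕ) :
    ∫⁻ u in Set.Ioi (1 : ℝ), ∫⁻ v in Set.Ioi (1 : ℝ),
        ENNReal.ofReal (Real.log v ^ k / k.factorial) * F (u * v) =
      ∫⁻ w in Set.Ioi (1 : ℝ),
        ENNReal.ofReal (Real.log w ^ (k + 1) / (k + 1).factorial) * F w := by
  rw [lintegral_lintegral_mul_comp_mul (by fun_prop) hF]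
  refine setLIntegral_congr_fun measurableSet_Ioi fun w (hw : 1 < w) => ?_
  simp only [setLIntegral_Ioo_log_pow_div_factorial_mul_inv k hw.le]

end MultiplicativeConvolution

/-- The composition of the maximal operators of finitely many transformations, that of `T 0` being
applied last. For commuting transformations it dominates the averages over all rectangles. -/
noncomputable def iteratedErgodicMax {X : Type*} :
    (m : ℕ) → (Fin m → X → X) → (X → ℝ≥0∞) → X → ℝ≥0∞
  | 0, _, g => g
  | m + 1, T, g => ergodicMax (T 0) (iteratedErgodicMax m (fun q => T q.succ) g)

/-- The sum of `g` over the points reached by applying each `T q` fewer than `n q` times, with `T 0`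
applied first. For commuting transformations this is the sum over a rectangle in the orbit. -/
def iteratedBirkhoffSum {X M : Type*} [AddCommMonoid M] :
    (m : ℕ) → (Fin m → X → X) → (X → M) → (Fin m → ℕ) → X → M
  | 0, _, g, _ => g
  | m + 1, T, g, n =>
    birkhoffSum (T 0) (iteratedBirkhoffSum m (fun q => T q.succ) g fun q => n q.succ) (n 0)

section IteratedErgodicMax

variable {X : Type*} {m : ℕ}

theorem prod_inv_mul_iteratedBirkhoffSum_le_iteratedErgodicMax (T : Fin m → X → X) (g : X → ℝ≥0∞)
    (n : Fin m → ℕ) (x : X) :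
    (∏ q, (n q : ℝ≥0∞)⁻¹) * iteratedBirkhoffSum m T g n x ≤ iteratedErgodicMax m T g x := by
  induction m generalizing x with
  | zero => simp [iteratedBirkhoffSum, iteratedErgodicMax]
  | succ m ih =>
    set T' : Fin m → X → X := fun q => T q.succ
    set n' : Fin m → ℕ := fun q => n q.succ
    calc (∏ q, (n q : ℝ≥0∞)⁻¹) * iteratedBirkhoffSum (m + 1) T g n x
        = (n 0 : ℝ≥0∞)⁻¹ * ∑ j ∈ Finset.range (n 0),
            (∏ q, (n' q : ℝ≥0∞)⁻¹) * iteratedBirkhoffSum m T' g n' ((T 0)^[j] x) := by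
          rw [Fin.prod_univ_succ, mul_assoc, ← Finset.mul_sum]
          rfl
      _ ≤ (n 0 : ℝ≥0∞)⁻¹ * birkhoffSum (T 0) (iteratedErgodicMax m T' g) (n 0) x := by
          gcongr
          exact Finset.sum_le_sum fun j _ => ih T' n' _
      _ ≤ iteratedErgodicMax (m + 1) T g x :=
          le_iSup (fun k : ℕ => (k : ℝ≥0∞)⁻¹ *
            birkhoffSum (T 0) (iteratedErgodicMax m T' g) k x) (n 0)

variable [MeasurableSpace X] {g : X → ℝ≥0∞}

theorem measurable_iteratedErgodicMax {T : Fin m → X → X} (hT : ∀ q, Measurable (T q))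
    (hg : Measurable g) : Measurable (iteratedErgodicMax m T g) := by
  induction m with
  | zero => exact hg
  | succ m ih => exact measurable_ergodicMax (hT 0) (ih fun q => hT q.succ)

theorem measure_lt_iteratedErgodicMax_le_lintegral {ν : Measure X} [SFinite ν]
    {T : Fin (m + 1) → X → X} (hT : ∀ q, MeasurePreserving (T q) ν ν) (hg : Measurable g) {y : ℝ}
    (hy : 0 < y) :
    ν {x | ENNReal.ofReal y < iteratedErgodicMax (m + 1) T g x} ≤
      ∫⁻ u in Set.Ioi (1 : ℝ), ENNReal.ofReal (Real.log u ^ m / m.factorial) *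
        ν {x | ENNReal.ofReal (y * u / 2 ^ (m + 1)) < g x} := by
  induction m generalizing y with
  | zero =>
    simpa [iteratedErgodicMax, mul_div_right_comm] using
      measure_lt_ergodicMax_le_lintegral (hT 0) hg hy
  | succ m ih =>
    have hanti : Antitone fun w : ℝ => ν {x | ENNReal.ofReal (y * w / 2 ^ (m + 2)) < g x} :=
      fun v w hvw => measure_mono fun x hx =>
        (ENNReal.ofReal_le_ofReal (by gcongr)).trans_lt (show _ < _ from hx)
    calc ν {x | ENNReal.ofReal y < iteratedErgodicMax (m + 2) T g x}
        ≤ ∫⁻ u in Set.Ioi (1 : ℝ), ν {x | ENNReal.ofReal (y / 2 * u) <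
            iteratedErgodicMax (m + 1) (fun q => T q.succ) g x} :=
          measure_lt_ergodicMax_le_lintegral (hT 0)
            (measurable_iteratedErgodicMax (fun q => (hT q.succ).measurable) hg) hy
      _ ≤ ∫⁻ u in Set.Ioi (1 : ℝ), ∫⁻ v in Set.Ioi (1 : ℝ),
            ENNReal.ofReal (Real.log v ^ m / m.factorial) *
              ν {x | ENNReal.ofReal (y * (u * v) / 2 ^ (m + 2)) < g x} := by
          refine setLIntegral_mono' measurableSet_Ioi fun u (hu : 1 < u) => ?_
          refine (ih (fun q => hT q.succ) (y := y / 2 * u) (by positivity)).trans_eq ?_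
          refine lintegral_congr fun v => ?_
          rw [show y / 2 * u * v / 2 ^ (m + 1) = y * (u * v) / 2 ^ (m + 2) by ring]
      _ = ∫⁻ w in Set.Ioi (1 : ℝ), ENNReal.ofReal (Real.log w ^ (m + 1) / (m + 1).factorial) *
            ν {x | ENNReal.ofReal (y * w / 2 ^ (m + 2)) < g x} :=
          lintegral_lintegral_log_pow_div_factorial_mul hanti.measurable m

end IteratedErgodicMax

/-- The shift by `k` on the space of fields indexed by `G`. A stationary field is one whose law is
invariant under all shifts. -/
def fieldShift {G E : Type*} [Add G] (k : G) (x : G → E) : G → E := fun i => x (i + k)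

section FieldShift

variable {G E : Type*}

theorem fieldShift_zero [AddMonoid G] (x : G → E) : fieldShift 0 x = x :=
  funext fun i => congrArg x (add_zero i)

theorem fieldShift_fieldShift [AddSemigroup G] (k l : G) (x : G → E) :
    fieldShift k (fieldShift l x) = fieldShift (k + l) x :=
  funext fun i => congrArg x (add_assoc i k l)

theorem iterate_fieldShift [AddMonoid G] (k : G) (j : ℕ) (x : G → E) :
    (fieldShift k)^[j] x = fieldShift (j • k) x := by
  induction j with
  | zero => simp [fieldShift_zero]
  | succ j ih => rw [Function.iterate_succ_apply', ih, fieldShift_fieldShift, succ_nsmul']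

theorem iteratedBirkhoffSum_fieldShift {M : Type*} [AddCommMonoid G] [AddCommMonoid M] {m : ℕ}
    (e : Fin m → G) (g : (G → E) → M) (n : Fin m → ℕ) (x : G → E) :
    iteratedBirkhoffSum m (fun q => fieldShift (e q)) g n x =
      ∑ i : (∀ q, Fin (n q)), g (fieldShift (∑ q, (i q : ℕ) • e q) x) := by
  induction m generalizing x with
  | zero => simp [iteratedBirkhoffSum, fieldShift_zero]
  | succ m ih =>
    rw [← (Fin.consEquiv fun q => Fin (n q)).sum_comp, Fintype.sum_prod_type]
    simp only [iteratedBirkhoffSum, birkhoffSum, ih, iterate_fieldShift, fieldShift_fieldShift,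
      ← Fin.sum_univ_eq_sum_range (fun j => ∑ i : (∀ q : Fin m, Fin (n q.succ)),
        g (fieldShift (∑ q, (i q : ℕ) • e q.succ + j • e 0) x))]
    simp [Fin.consEquiv, Fin.sum_univ_succ, add_comm]

theorem measurable_fieldShift [Add G] [MeasurableSpace E] (k : G) :
    Measurable (fieldShift (E := E) k) :=
  measurable_pi_lambda _ fun i => measurable_pi_apply (i + k)

theorem measurePreserving_fieldShift_of_identDistrib [Add G] [MeasurableSpace E] {Ω : Type*}
    [MeasurableSpace Ω] {μ : Measure Ω} {Y : G → Ω → E} {k : G}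
    (h : IdentDistrib (fun ω i => Y (i + k) ω) (fun ω i => Y i ω) μ μ) :
    MeasurePreserving (fieldShift k) (μ.map fun ω i => Y i ω) (μ.map fun ω i => Y i ω) where
  measurable := measurable_fieldShift k
  map_eq := (AEMeasurable.map_map_of_aemeasurable (measurable_fieldShift k).aemeasurable
    h.aemeasurable_snd).trans h.map_eq

theorem map_setOf_ofReal_lt_ofReal_apply {Ω : Type*} [MeasurableSpace Ω] {μ : Measure Ω}
    {Y : G → Ω → ℝ} (hY : AEMeasurable (fun ω i => Y i ω) μ) (i : G) {a : ℝ} (ha : 0 ≤ a) :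
    μ.map (fun ω i => Y i ω) {x | ENNReal.ofReal a < ENNReal.ofReal (x i)} = μ {ω | a < Y i ω} := by
  rw [Measure.map_apply_of_aemeasurable hY (measurableSet_lt (by fun_prop) (by fun_prop))]
  simp only [Set.preimage_ofPred_eq, ENNReal.ofReal_lt_ofReal_iff_of_nonneg ha]

end FieldShift

section LatticeFields

variable {d : ℕ}

theorem sum_Icc_one_eq_sum_fin {M : Type*} [AddCommMonoid M] (f : (Fin d → ℤ) → M)
    (n : Fin d → ℕ) :
    ∑ i ∈ Finset.Icc 1 (fun q => (n q : ℤ)), f i =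
      ∑ i : (∀ q, Fin (n q)), f (1 + ∑ q, (i q : ℕ) • Pi.single q 1) := by
  have hcoord (i : ∀ q, Fin (n q)) :
      1 + ∑ q, (i q : ℕ) • (Pi.single q 1 : Fin d → ℤ) = fun q => 1 + ((i q : ℕ) : ℤ) := by
    ext q
    simp [Finset.sum_apply, Pi.single_apply]
  simp only [hcoord]
  refine Finset.sum_bij' (fun b hb q => ⟨(b q - 1).toNat, ?_⟩) (fun i _ q => 1 + ((i q : ℕ) : ℤ))
    (fun _ _ => Finset.mem_univ _) ?_ ?_ ?_ ?_
  · have hq := (Finset.mem_Icc.1 hb).1 q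
    have hq' := (Finset.mem_Icc.1 hb).2 q
    simp only [Pi.one_apply] at hq hq'
    omega
  · intro i _
    simp only [Finset.mem_Icc, Pi.le_def, Pi.one_apply]
    exact ⟨fun q => by omega, fun q => by omega⟩
  · intro b hb
    ext q
    have hq := (Finset.mem_Icc.1 hb).1 q
    simp only [Pi.one_apply] at hq ⊢
    omega
  · intro i _
    ext q
    simp
  · intro b hb
    congr 1
    ext q
    have hq := (Finset.mem_Icc.1 hb).1 q
    simp only [Pi.one_apply] at hq ⊢
    omega

theorem iteratedBirkhoffSum_fieldShift_single {E M : Type*} [AddCommMonoid M] (f : E → M)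
    (n : Fin d → ℕ) (x : (Fin d → ℤ) → E) :
    iteratedBirkhoffSum d (fun q => fieldShift (Pi.single q 1)) (fun x => f (x 1)) n x =
      ∑ i ∈ Finset.Icc 1 (fun q => (n q : ℤ)), f (x i) := by
  rw [iteratedBirkhoffSum_fieldShift, sum_Icc_one_eq_sum_fin]
  rfl

theorem ofReal_rectangle_average_le_iteratedErgodicMax (x : (Fin d → ℤ) → ℝ) {n : Fin d → ℤ}
    (hn : ∀ q, 1 ≤ n q) :
    ENNReal.ofReal ((∏ q, (n q : ℝ))⁻¹ * ∑ i ∈ Finset.Icc 1 n, x i) ≤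
      iteratedErgodicMax d (fun q => fieldShift (Pi.single q 1))
        (fun x => ENNReal.ofReal (x 1)) x := by
  lift n to Fin d → ℕ using fun q => zero_le_one.trans (hn q)
  have hn0 (q) : (0 : ℝ) < n q := Nat.cast_pos.2 (Int.natCast_pos.1 (zero_lt_one.trans_le (hn q)))
  have hvol : ENNReal.ofReal (∏ q, ((n q : ℤ) : ℝ))⁻¹ = ∏ q, (n q : ℝ≥0∞)⁻¹ := by
    rw [← Finset.prod_inv_distrib, ENNReal.ofReal_prod_of_nonneg fun q _ => by positivity]
    exact Finset.prod_congr rfl fun q _ => by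
      rw [Int.cast_natCast, ENNReal.ofReal_inv_of_pos (hn0 q), ENNReal.ofReal_natCast]
  rw [ENNReal.ofReal_mul (by positivity), hvol]
  refine le_trans ?_ (prod_inv_mul_iteratedBirkhoffSum_le_iteratedErgodicMax _ _ n x)
  rw [iteratedBirkhoffSum_fieldShift_single]
  gcongr
  exact Finset.le_sum_of_subadditive _ ENNReal.ofReal_zero.le (fun _ _ => ENNReal.ofReal_add_le) _ _

end LatticeFields

theorem maximal_inequality_stationary_field_general
    (d : ℕ) (hd : 1 ≤ d)
    {Ω : Type*} [MeasurableSpace Ω] (μ : Measure Ω) [SFinite μ]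
    (Y : (Fin d → ℤ) → Ω → ℝ)
    (hstat : ∀ k : Fin d → ℤ,
      IdentDistrib (fun ω => fun i : Fin d → ℤ => Y (i + k) ω)
        (fun ω => fun i : Fin d → ℤ => Y i ω) μ μ)
    (y : ℝ) (hy : 0 < y) :
    μ {ω | ENNReal.ofReal y <
        ⨆ n : {n : Fin d → ℤ // ∀ q, 1 ≤ n q},
          ENNReal.ofReal ((∏ q, (n.1 q : ℝ))⁻¹ * ∑ i ∈ Finset.Icc 1 n.1, Y i ω)} ≤
      ∫⁻ u in Set.Ioi (1 : ℝ),
        ENNReal.ofReal ((Real.log u) ^ (d - 1) / (d - 1).factorial) *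
          μ {ω | y * u / 2 ^ d < Y 1 ω} := by
  obtain ⟨m, rfl⟩ := Nat.exists_eq_add_of_le' hd
  set Φ : Ω → (Fin (m + 1) → ℤ) → ℝ := fun ω i => Y i ω
  have hΦ : AEMeasurable Φ μ := (hstat 0).aemeasurable_snd
  have hT (q : Fin (m + 1)) :
      MeasurePreserving (fieldShift (Pi.single q (1 : ℤ))) (μ.map Φ) (μ.map Φ) :=
    measurePreserving_fieldShift_of_identDistrib (hstat _)
  set g : ((Fin (m + 1) → ℤ) → ℝ) → ℝ≥0∞ := fun x => ENNReal.ofReal (x 1)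
  have hg : Measurable g := (measurable_pi_apply 1).ennreal_ofReal
  set G := iteratedErgodicMax (m + 1) (fun q => fieldShift (Pi.single q (1 : ℤ))) g
  have hG : Measurable G := measurable_iteratedErgodicMax (fun q => (hT q).measurable) hg
  calc _ ≤ μ {ω | ENNReal.ofReal y < G (Φ ω)} := measure_mono fun ω hω => lt_of_lt_of_le hω <|
        iSup_le fun n => ofReal_rectangle_average_le_iteratedErgodicMax (Φ ω) n.2
    _ = μ.map Φ {x | ENNReal.ofReal y < G x} :=
        (Measure.map_apply_of_aemeasurable hΦ (measurableSet_lt measurable_const hG)).symm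
    _ ≤ ∫⁻ u in Set.Ioi (1 : ℝ), ENNReal.ofReal (Real.log u ^ m / m.factorial) *
          μ.map Φ {x | ENNReal.ofReal (y * u / 2 ^ (m + 1)) < g x} :=
        measure_lt_iteratedErgodicMax_le_lintegral hT hg hy
    _ = _ := setLIntegral_congr_fun measurableSet_Ioi fun u (hu : 1 < u) => by
        rw [map_setOf_ofReal_lt_ofReal_apply hΦ 1 (by positivity), add_tsub_cancel_right]

/-- Maximal inequality for strictly stationary nonnegative random fields:
`P( sup_{n ∈ ℕ^d} |n|⁻¹ Σ_{1 ≼ i ≼ n} Y_i > y ) ≤ ∫_1^∞ P(Y_1 > y u 2^{-d}) (log u)^{d-1} du`. -/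
theorem maximal_inequality_stationary_field
    (d : ℕ) (hd : 1 ≤ d)
    {Ω : Type*} [MeasurableSpace Ω] (μ : Measure Ω) [IsProbabilityMeasure μ]
    (Y : (Fin d → ℤ) → Ω → ℝ)
    (hmeas : ∀ i, Measurable (Y i))
    (hpos : ∀ i ω, 0 ≤ Y i ω)
    (hstat : ∀ k : Fin d → ℤ,
      IdentDistrib (fun ω => fun i : Fin d → ℤ => Y (i + k) ω)
        (fun ω => fun i : Fin d → ℤ => Y i ω) μ μ)
    (y : ℝ) (hy : 0 < y) :
    μ {ω | ENNReal.ofReal y <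
        ⨆ n : {n : Fin d → ℤ // ∀ q, 1 ≤ n q},
          ENNReal.ofReal ((∏ q, (n.1 q : ℝ))⁻¹ * ∑ i ∈ Finset.Icc 1 n.1, Y i ω)} ≤
      ∫⁻ u in Set.Ioi (1 : ℝ),
        ENNReal.ofReal ((Real.log u) ^ (d - 1)) * μ {ω | y * u / 2 ^ d < Y 1 ω} := by
  exact (maximal_inequality_stationary_field_general d hd μ Y hstat y hy).trans <|
    setLIntegral_mono' measurableSet_Ioi fun u (hu : 1 < u) => by
      gcongr
      exact log_pow_div_factorial_le_log_pow (d - 1) hu.le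
end

section
/- Let r ≥ 0 and let (d_k)_{k=1}^n be a martingale difference sequence with respect to a filtration (ℱ_k)_{k=0}^n. Then there exist constants C_r and K_r depending only on r such that: (i) ‖Σ_{k=1}^n d_k‖_{2,r} ≤ C_r ‖max_{1≤k≤n} |d_k|‖_{2,r} + C_r ( Σ_{k=1}^n ‖ E[d_k² | ℱ_{k−1}] ‖_{1,r} )^{1/2}; and (ii) ‖Σ_{k=1}^n d_k‖_{2,r}² ≤ K_r Σ_{k=1}^n ‖d_k‖_{2,r}². -/
open MeasureTheory ProbabilityTheory ENNReal

noncomputable section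

/-- The Young function `φ_{p,r}(x) = x^p (1 + log(1+x))^r`. -/
def phiYoung (p r x : ℝ) : ℝ := x ^ p * (1 + Real.log (1 + x)) ^ r

/-- The Luxemburg (Orlicz) norm associated with `φ_{p,r}`. -/
def orliczNorm {Ω : Type*} [MeasurableSpace Ω] (μ : Measure Ω) (p r : ℝ) (X : Ω → ℝ) : ℝ≥0∞ :=
  sInf {l : ℝ≥0∞ | 0 < l ∧ l < ⊤ ∧
    ∫⁻ ω, ENNReal.ofReal (phiYoung p r (|X ω| / l.toReal)) ∂μ ≤ 1}
/-!
With `w(x) = (1 + log(1 + |x|))^r`, the Young function `φ_{2,r}` is `Φ(x) = w(x) x²`. Let `F` be the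
second primitive of `w`. Since `w` is even, nondecreasing in `|x|` and doubling, `F` is comparable
to `Φ` and satisfies the Taylor estimate `F(x + y) ≤ F(x) + F'(x) y + C (w(x) y² + Φ(y))`. Put
`S_k = e_0 + ⋯ + e_{k-1}` for martingale differences `e_k`; taking `x = S_k` and `y = e_k`, the
linear term has mean zero. The Young-type inequality `w(x) y² ≤ t² (Φ(x) + Φ(y / t))` bounds the
quadratic term by `t_k² (E Φ(S_k) + A)`, where `A` is a constant: for (ii), `t_k` is essentially the
norm of `e_k`, and for (i) one first replaces `e_k²` by its conditional expectation, so that `t_k²`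
is essentially the norm of the latter. After normalisation `∑ t_k² ≤ 1`, and Grönwall's inequality
for `E F(S_k)` bounds `E Φ(S_n)`, hence the norm.

In (i) it remains to control `∑ E Φ(e_k)`, which is not given in terms of the `t_k`. With `R_k` the
running maximum of `|e_0|, …, |e_{k-1}|`, which is predictable, `Φ(e_k)` exceeds `w(R_k) e_k²` by at
most `(w(R_{k+1}) - w(R_k)) max |e_j|²`. This excess telescopes to at most `Φ(max |e_j|)`, and
`w(R_k) e_k²` is handled by conditioning as before.
-/

section Weights

/-- A continuous positive weight which is nondecreasing in `|x|` (in particular even) and doubling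
with constant `K`. -/
structure IsDoublingWeight (w : ℝ → ℝ) (K : ℝ) : Prop where
  continuous : Continuous w
  pos : ∀ x, 0 < w x
  le_of_abs_le : ∀ {x y}, |x| ≤ |y| → w x ≤ w y
  doubling : ∀ x, w (2 * x) ≤ K * w x

/-- The Young function `Φ(x) = w(x) x²` attached to a weight `w`; `φ_{2,r}` is of this form. -/
def weightedSq (w : ℝ → ℝ) (x : ℝ) : ℝ := w x * x ^ 2

/-- The second primitive of `w` vanishing to first order at `0`, in Cauchy's form. It is a smooth
substitute for `weightedSq w`, with first derivative `∫ s in 0..x, w s`. -/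
def secondPrimitive (w : ℝ → ℝ) (x : ℝ) : ℝ := ∫ s in (0 : ℝ)..x, (x - s) * w s

variable {w : ℝ → ℝ} {K : ℝ}

lemma continuous_secondPrimitive (hw : Continuous w) : Continuous (secondPrimitive w) := by
  unfold secondPrimitive
  refine intervalIntegral.continuous_parametric_intervalIntegral_of_continuous ?_ continuous_id
  fun_prop

lemma secondPrimitive_add (hw : Continuous w) (x y : ℝ) :
    secondPrimitive w (x + y) = secondPrimitive w x + (∫ s in (0 : ℝ)..x, w s) * y
      + y ^ 2 * ∫ t in (0 : ℝ)..1, (1 - t) * w (x + y * t) := by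
  have hint : ∀ c a b : ℝ, IntervalIntegrable (fun s => (c - s) * w s) volume a b := fun c a b =>
    Continuous.intervalIntegrable (by fun_prop) a b
  have hleft : ∫ s in (0 : ℝ)..x, (x + y - s) * w s
      = secondPrimitive w x + (∫ s in (0 : ℝ)..x, w s) * y := by
    rw [secondPrimitive, ← intervalIntegral.integral_mul_const,
      ← intervalIntegral.integral_add (hint x 0 x) ((hw.intervalIntegrable 0 x).mul_const y)]
    congr 1 with s
    ring
  have hright : ∫ s in x..x + y, (x + y - s) * w s
      = y ^ 2 * ∫ t in (0 : ℝ)..1, (1 - t) * w (x + y * t) := by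
    have hsubst := intervalIntegral.mul_integral_comp_add_mul (a := 0) (b := 1)
      (f := fun s => (x + y - s) * w s) y x
    rw [mul_zero, add_zero, mul_one] at hsubst
    rw [← hsubst, sq, mul_assoc,
      ← intervalIntegral.integral_const_mul y fun t => (1 - t) * w (x + y * t)]
    congr 2 with t
    ring
  rw [← hleft, ← hright]
  exact (intervalIntegral.integral_add_adjacent_intervals (hint _ 0 x) (hint _ x (x + y))).symm

lemma secondPrimitive_add_le_of_forall_le (hw : Continuous w) {x y M : ℝ}
    (hM : ∀ t ∈ Set.Icc (0 : ℝ) 1, w (x + y * t) ≤ M) :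
    secondPrimitive w (x + y)
      ≤ secondPrimitive w x + (∫ s in (0 : ℝ)..x, w s) * y + M / 2 * y ^ 2 := by
  have hrem : ∫ t in (0 : ℝ)..1, (1 - t) * w (x + y * t) ≤ M / 2 := by
    calc _ ≤ ∫ t in (0 : ℝ)..1, (1 - t) * M :=
          intervalIntegral.integral_mono_on zero_le_one
            (Continuous.intervalIntegrable (by fun_prop) 0 1)
            (Continuous.intervalIntegrable (by fun_prop) 0 1)
            fun t ht => mul_le_mul_of_nonneg_left (hM t ht) (sub_nonneg.mpr ht.2)
      _ = M / 2 := by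
          rw [intervalIntegral.integral_mul_const,
            intervalIntegral.integral_sub (by simp) (by simp)]
          norm_num
          ring
  rw [secondPrimitive_add hw]
  nlinarith [mul_le_mul_of_nonneg_left hrem (sq_nonneg y)]

namespace IsDoublingWeight

variable (hw : IsDoublingWeight w K)
include hw

lemma weightedSq_nonneg (x : ℝ) : 0 ≤ weightedSq w x := mul_nonneg (hw.pos x).le (sq_nonneg x)

lemma continuous_weightedSq : Continuous (weightedSq w) := hw.continuous.mul (continuous_pow 2)

lemma one_le : 1 ≤ K := by
  have h := hw.doubling 0
  rw [mul_zero] at h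
  exact (le_mul_iff_one_le_left (hw.pos 0)).mp h

lemma weightedSq_le_of_abs_le {x y : ℝ} (h : |x| ≤ |y|) : weightedSq w x ≤ weightedSq w y :=
  mul_le_mul (hw.le_of_abs_le h) (sq_le_sq.mpr h) (sq_nonneg x) (hw.pos y).le

lemma weightedSq_mul_le {c : ℝ} (hc : |c| ≤ 1) (x : ℝ) :
    weightedSq w (c * x) ≤ c ^ 2 * weightedSq w x := by
  have h : w (c * x) ≤ w x := hw.le_of_abs_le (by
    rw [abs_mul]; exact mul_le_of_le_one_left (abs_nonneg x) hc)
  calc w (c * x) * (c * x) ^ 2 ≤ w x * (c * x) ^ 2 := by gcongr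
    _ = c ^ 2 * weightedSq w x := by unfold weightedSq; ring

lemma mul_sq_le (x y : ℝ) : w x * y ^ 2 ≤ weightedSq w x + weightedSq w y := by
  rcases le_total |x| |y| with h | h
  · have := mul_le_mul_of_nonneg_right (hw.le_of_abs_le h) (sq_nonneg y)
    exact this.trans (le_add_of_nonneg_left (hw.weightedSq_nonneg x))
  · have := mul_le_mul_of_nonneg_left (sq_le_sq.mpr h) (hw.pos x).le
    exact this.trans (le_add_of_nonneg_right (hw.weightedSq_nonneg y))

lemma mul_sq_le_sq_mul {t : ℝ} (ht : t ≠ 0) (x y : ℝ) :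
    w x * y ^ 2 ≤ t ^ 2 * (weightedSq w x + weightedSq w (y / t)) := by
  calc w x * y ^ 2 = t ^ 2 * (w x * (y / t) ^ 2) := by field_simp
    _ ≤ _ := mul_le_mul_of_nonneg_left (hw.mul_sq_le x (y / t)) (sq_nonneg t)

lemma le_mul_add_of_abs_le_add {x y z : ℝ} (h : |z| ≤ |x| + |y|) : w z ≤ K * (w x + w y) := by
  have hmax : ∀ u, |z| ≤ 2 * |u| → w z ≤ K * w u := fun u hu =>
    (hw.le_of_abs_le (by rwa [abs_mul, abs_two])).trans (hw.doubling u)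
  have hK := zero_le_one.trans hw.one_le
  rw [mul_add]
  rcases le_total |x| |y| with hxy | hxy
  · exact (hmax y (by linarith)).trans (le_add_of_nonneg_left (mul_nonneg hK (hw.pos x).le))
  · exact (hmax x (by linarith)).trans (le_add_of_nonneg_right (mul_nonneg hK (hw.pos y).le))

lemma weightedSq_add_le (x y : ℝ) :
    weightedSq w (x + y) ≤ 6 * K * (weightedSq w x + weightedSq w y) := by
  have hK := zero_le_one.trans hw.one_le
  have hsq : (x + y) ^ 2 ≤ 2 * (x ^ 2 + y ^ 2) := add_sq_le
  calc w (x + y) * (x + y) ^ 2 ≤ K * (w x + w y) * (2 * (x ^ 2 + y ^ 2)) :=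
        mul_le_mul (hw.le_mul_add_of_abs_le_add (abs_add_le x y)) hsq (sq_nonneg _)
          (mul_nonneg hK (add_pos (hw.pos x) (hw.pos y)).le)
    _ = 2 * K * (weightedSq w x + weightedSq w y + w x * y ^ 2 + w y * x ^ 2) := by
        unfold weightedSq; ring
    _ ≤ 2 * K * (3 * (weightedSq w x + weightedSq w y)) := by
        gcongr
        linarith [hw.mul_sq_le x y, hw.mul_sq_le y x]
    _ = _ := by ring

lemma secondPrimitive_le (x : ℝ) : secondPrimitive w x ≤ weightedSq w x := by
  have hM : ∀ t ∈ Set.Icc (0 : ℝ) 1, w (0 + x * t) ≤ w x := fun t ht => hw.le_of_abs_le (by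
    rw [zero_add, abs_mul, abs_of_nonneg ht.1]
    exact mul_le_of_le_one_right (abs_nonneg x) ht.2)
  have h := secondPrimitive_add_le_of_forall_le hw.continuous hM
  have h0 := hw.weightedSq_nonneg x
  simp only [zero_add, secondPrimitive, intervalIntegral.integral_same, zero_mul] at h
  unfold secondPrimitive weightedSq at *
  linarith

lemma weightedSq_le_secondPrimitive (x : ℝ) : weightedSq w x ≤ 8 * K * secondPrimitive w x := by
  have hK := zero_le_one.trans hw.one_le
  have hcont : Continuous fun t => (1 - t) * w (x * t) := by
    have := hw.continuous
    fun_prop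
  have hhalf : w (x / 2) / 8 ≤ ∫ t in (0 : ℝ)..1, (1 - t) * w (x * t) := by
    calc w (x / 2) / 8 = ∫ t in (1 / 2 : ℝ)..1, (1 - t) * w (x / 2) := by
          rw [intervalIntegral.integral_mul_const,
            intervalIntegral.integral_sub (by simp) (by simp)]
          norm_num
          ring
      _ ≤ ∫ t in (1 / 2 : ℝ)..1, (1 - t) * w (x * t) := by
          refine intervalIntegral.integral_mono_on (by norm_num)
            (Continuous.intervalIntegrable (by fun_prop) _ _) (hcont.intervalIntegrable _ _)
            fun t ht => mul_le_mul_of_nonneg_left (hw.le_of_abs_le ?_) (sub_nonneg.mpr ht.2)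
          rw [div_eq_mul_one_div, abs_mul, abs_mul]
          gcongr
          exact ht.1
      _ ≤ ∫ t in (0 : ℝ)..1, (1 - t) * w (x * t) := by
          refine intervalIntegral.integral_mono_interval (by norm_num) (by norm_num) le_rfl ?_
            (hcont.intervalIntegrable _ _)
          filter_upwards [ae_restrict_mem measurableSet_Ioc] with t ht
          exact mul_nonneg (sub_nonneg.mpr ht.2) (hw.pos _).le
  have hdouble : w x ≤ K * w (x / 2) := by
    simpa [mul_div_cancel₀] using hw.doubling (x / 2)
  have hF := secondPrimitive_add hw.continuous 0 x
  simp only [zero_add, secondPrimitive, intervalIntegral.integral_same, zero_mul] at hF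
  rw [weightedSq, secondPrimitive, hF]
  calc w x * x ^ 2 ≤ 8 * K * (x ^ 2 * (w (x / 2) / 8)) := by nlinarith [sq_nonneg x]
    _ ≤ _ := by gcongr

lemma secondPrimitive_nonneg (x : ℝ) : 0 ≤ secondPrimitive w x :=
  nonneg_of_mul_nonneg_right
    ((hw.weightedSq_nonneg x).trans (hw.weightedSq_le_secondPrimitive x))
    (by linarith [hw.one_le])

lemma abs_integral_mul_le (x y : ℝ) :
    |(∫ s in (0 : ℝ)..x, w s) * y| ≤ 2 * (weightedSq w x + weightedSq w y) := by
  have hG : |∫ s in (0 : ℝ)..x, w s| ≤ w x * |x| := by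
    have := intervalIntegral.norm_integral_le_of_norm_le_const (a := 0) (b := x) (C := w x)
      (f := w) fun s hs => by
        rw [Real.norm_of_nonneg (hw.pos s).le]
        refine hw.le_of_abs_le ?_
        simpa using Set.abs_sub_left_of_mem_uIcc (Set.uIoc_subset_uIcc hs)
    simpa using this
  calc _ ≤ w x * |x| * |y| := by rw [abs_mul]; gcongr
    _ ≤ w x * (x ^ 2 + y ^ 2) := by
        rw [mul_assoc]
        refine mul_le_mul_of_nonneg_left ?_ (hw.pos x).le
        nlinarith [two_mul_le_add_sq |x| |y|, sq_abs x, sq_abs y, abs_nonneg x, abs_nonneg y]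
    _ ≤ _ := by
        have := hw.mul_sq_le x y
        have := hw.weightedSq_nonneg y
        unfold weightedSq at *
        linarith

lemma secondPrimitive_add_le (x y : ℝ) :
    secondPrimitive w (x + y) ≤ secondPrimitive w x + (∫ s in (0 : ℝ)..x, w s) * y
      + K / 2 * (w x * y ^ 2 + weightedSq w y) := by
  have hM : ∀ t ∈ Set.Icc (0 : ℝ) 1, w (x + y * t) ≤ K * (w x + w y) := fun t ht =>
    hw.le_mul_add_of_abs_le_add <| (abs_add_le _ _).trans <| by
      rw [abs_mul, abs_of_nonneg ht.1]
      gcongr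
      exact mul_le_of_le_one_right (abs_nonneg y) ht.2
  have h := secondPrimitive_add_le_of_forall_le hw.continuous hM
  unfold weightedSq
  linarith

end IsDoublingWeight

/-- The weight of `φ_{2,r}`. -/
def logWeight (r x : ℝ) : ℝ := (1 + Real.log (1 + |x|)) ^ r

lemma phiYoung_two_abs (r x : ℝ) : phiYoung 2 r |x| = weightedSq (logWeight r) x := by
  rw [phiYoung, Real.rpow_two, sq_abs, mul_comm]
  rfl

lemma one_le_one_add_log {x : ℝ} (hx : 0 ≤ x) : 1 ≤ 1 + Real.log (1 + x) :=
  le_add_of_nonneg_right (Real.log_nonneg (by linarith))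

lemma one_add_log_le_two_mul {x y : ℝ} (hx : 0 ≤ x) (hy : 0 ≤ y) (hxy : 1 + x ≤ 2 * (1 + y)) :
    1 + Real.log (1 + x) ≤ 2 * (1 + Real.log (1 + y)) := by
  have hlog : Real.log (1 + x) ≤ Real.log 2 + Real.log (1 + y) := by
    rw [← Real.log_mul two_ne_zero (by linarith)]
    exact Real.log_le_log (by linarith) hxy
  linarith [Real.log_two_lt_d9, one_le_one_add_log hy]

variable {r : ℝ}

lemma isDoublingWeight_logWeight (hr : 0 ≤ r) : IsDoublingWeight (logWeight r) (2 ^ r) where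
  continuous := by
    refine Continuous.rpow_const (continuous_const.add (Continuous.log (by fun_prop) fun x => ?_))
      fun x => Or.inr hr
    positivity
  pos x := Real.rpow_pos_of_pos (zero_lt_one.trans_le (one_le_one_add_log (abs_nonneg x))) r
  le_of_abs_le {x y} h := by
    have := one_le_one_add_log (abs_nonneg x)
    unfold logWeight
    gcongr
  doubling x := by
    have hle := one_le_one_add_log (abs_nonneg x)
    have h2 := one_le_one_add_log (abs_nonneg (2 * x))
    unfold logWeight
    rw [← Real.mul_rpow two_pos.le (by linarith)]
    refine Real.rpow_le_rpow (by linarith) ?_ hr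
    refine one_add_log_le_two_mul (abs_nonneg _) (abs_nonneg x) ?_
    rw [abs_mul, abs_two]
    linarith

lemma weightedSq_logWeight_sqrt_le (hr : 0 ≤ r) (v : ℝ) :
    weightedSq (logWeight r) √v ≤ 2 ^ r * phiYoung 1 r |v| := by
  have hv := one_le_one_add_log (abs_nonneg v)
  have hsqrt : √v ^ 2 ≤ |v| := by
    rw [← Real.sq_sqrt (abs_nonneg v)]
    gcongr
    exact le_abs_self v
  have hweight : logWeight r √v ≤ 2 ^ r * (1 + Real.log (1 + |v|)) ^ r := by
    have h1 := one_le_one_add_log (abs_nonneg √v)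
    rw [← Real.mul_rpow two_pos.le (by linarith)]
    refine Real.rpow_le_rpow (by linarith) ?_ hr
    refine one_add_log_le_two_mul (abs_nonneg _) (abs_nonneg v) ?_
    rw [abs_of_nonneg (Real.sqrt_nonneg v)]
    nlinarith [abs_nonneg v, sq_nonneg (√v - 1)]
  calc weightedSq (logWeight r) √v
      ≤ 2 ^ r * (1 + Real.log (1 + |v|)) ^ r * |v| := by unfold weightedSq; gcongr
    _ = 2 ^ r * phiYoung 1 r |v| := by rw [phiYoung, Real.rpow_one]; ring

end Weights

lemma le_mul_exp_sum_of_le_one_add_mul {u b c : ℕ → ℝ} {n : ℕ} (h0 : 0 ≤ u 0)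
    (hb : ∀ k < n, 0 ≤ b k) (hc : ∀ k < n, 0 ≤ c k)
    (hu : ∀ k < n, u (k + 1) ≤ (1 + c k) * u k + b k) :
    u n ≤ (u 0 + ∑ k ∈ Finset.range n, b k) * Real.exp (∑ k ∈ Finset.range n, c k) := by
  have h := discrete_gronwall (n₀ := 0) (u := fun k => u (min k n))
    (b := fun k => if k < n then b k else 0) (c := fun k => if k < n then c k else 0)
    (by simpa using h0) (fun k _ => by
      rcases lt_or_ge k n with hk | hk
      · simpa [hk, hk.le, Nat.succ_le_iff.mpr hk] using hu k hk
      · simp [hk, hk.not_gt, hk.trans k.le_succ])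
    (fun k _ => by split_ifs with hk <;> simp [hc, hk])
    (fun k _ => by split_ifs with hk <;> simp [hb, hk]) n.zero_le
  have hsum : ∀ f : ℕ → ℝ,
      ∑ k ∈ Finset.range n, (if k < n then f k else 0) = ∑ k ∈ Finset.range n, f k := fun f =>
    Finset.sum_congr rfl fun k hk => if_pos (Finset.mem_range.mp hk)
  simpa [hsum] using h

section Modular

variable {Ω : Type*} {mΩ : MeasurableSpace Ω} {μ : Measure Ω} {w : ℝ → ℝ} {K A : ℝ}
  {X Y : Ω → ℝ}

/-- The modular bound `E[Φ(X)] ≤ A`, where `Φ = weightedSq w`. Integrability is part of it, as the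
Bochner integral of a non-integrable function is `0`. -/
structure HasModularLE (μ : Measure Ω) (w : ℝ → ℝ) (X : Ω → ℝ) (A : ℝ) : Prop where
  integrable : Integrable (fun ω => weightedSq w (X ω)) μ
  integral_le : ∫ ω, weightedSq w (X ω) ∂μ ≤ A

namespace IsDoublingWeight

variable (hw : IsDoublingWeight w K)
include hw

lemma hasModularLE_iff_lintegral_le (hX : AEStronglyMeasurable X μ) (hA : 0 ≤ A) :
    HasModularLE μ w X A ↔
      ∫⁻ ω, ENNReal.ofReal (weightedSq w (X ω)) ∂μ ≤ ENNReal.ofReal A := by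
  have hnonneg : 0 ≤ᵐ[μ] fun ω => weightedSq w (X ω) :=
    .of_forall fun ω => hw.weightedSq_nonneg (X ω)
  refine ⟨fun ⟨hint, hle⟩ => ?_, fun hle => ?_⟩
  · rw [← ofReal_integral_eq_lintegral_ofReal hint hnonneg]
    exact ENNReal.ofReal_le_ofReal hle
  · have hint : Integrable (fun ω => weightedSq w (X ω)) μ :=
      (lintegral_ofReal_ne_top_iff_integrable
        (hw.continuous_weightedSq.comp_aestronglyMeasurable hX) hnonneg).mp
        (hle.trans_lt ENNReal.ofReal_lt_top).ne
    rw [← ofReal_integral_eq_lintegral_ofReal hint hnonneg,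
      ENNReal.ofReal_le_ofReal_iff hA] at hle
    exact ⟨hint, hle⟩

lemma hasModularLE_of_abs_le (hY : HasModularLE μ w Y A) (hX : AEStronglyMeasurable X μ)
    (hXY : ∀ᵐ ω ∂μ, |X ω| ≤ |Y ω|) : HasModularLE μ w X A := by
  have hle : ∀ᵐ ω ∂μ, weightedSq w (X ω) ≤ weightedSq w (Y ω) :=
    hXY.mono fun ω => hw.weightedSq_le_of_abs_le
  have hint := hY.integrable.mono' (hw.continuous_weightedSq.comp_aestronglyMeasurable hX) <|
    hle.mono fun ω hω => by rwa [Real.norm_of_nonneg (hw.weightedSq_nonneg _)]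
  exact ⟨hint, (integral_mono_ae hint hY.integrable hle).trans hY.integral_le⟩

lemma hasModularLE_const_mul {c : ℝ} (hc : |c| ≤ 1) (hX : AEStronglyMeasurable X μ)
    (hXA : HasModularLE μ w X A) : HasModularLE μ w (fun ω => c * X ω) (c ^ 2 * A) := by
  have hint := (hw.hasModularLE_of_abs_le hXA (hX.const_mul c) <| .of_forall fun ω => by
    rw [abs_mul]; exact mul_le_of_le_one_left (abs_nonneg _) hc).integrable
  refine ⟨hint, ?_⟩
  calc ∫ ω, weightedSq w (c * X ω) ∂μ ≤ ∫ ω, c ^ 2 * weightedSq w (X ω) ∂μ :=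
        integral_mono hint (hXA.integrable.const_mul _) fun ω => hw.weightedSq_mul_le hc (X ω)
    _ = c ^ 2 * ∫ ω, weightedSq w (X ω) ∂μ := integral_const_mul _ _
    _ ≤ c ^ 2 * A := by gcongr; exact hXA.integral_le

lemma integrable_mul_sq (hX : AEStronglyMeasurable X μ) (hY : AEStronglyMeasurable Y μ)
    (hΦX : Integrable (fun ω => weightedSq w (X ω)) μ)
    (hΦY : Integrable (fun ω => weightedSq w (Y ω)) μ) :
    Integrable (fun ω => w (X ω) * Y ω ^ 2) μ :=
  (hΦX.add hΦY).mono' ((hw.continuous.comp_aestronglyMeasurable hX).mul (hY.pow 2)) <|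
    .of_forall fun ω => by
      rw [Real.norm_of_nonneg (mul_nonneg (hw.pos _).le (sq_nonneg _))]
      exact hw.mul_sq_le (X ω) (Y ω)

lemma integrable_sq (hX : AEStronglyMeasurable X μ)
    (hΦX : Integrable (fun ω => weightedSq w (X ω)) μ) : Integrable (fun ω => X ω ^ 2) μ :=
  (hΦX.const_mul (w 0)⁻¹).mono' (hX.pow 2) <| .of_forall fun ω => by
    rw [Real.norm_of_nonneg (sq_nonneg _), inv_mul_eq_div, le_div_iff₀' (hw.pos 0)]
    exact mul_le_mul_of_nonneg_right (hw.le_of_abs_le (by simp)) (sq_nonneg _)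

lemma integrable_weightedSq_add (hX : AEStronglyMeasurable X μ) (hY : AEStronglyMeasurable Y μ)
    (hΦX : Integrable (fun ω => weightedSq w (X ω)) μ)
    (hΦY : Integrable (fun ω => weightedSq w (Y ω)) μ) :
    Integrable (fun ω => weightedSq w (X ω + Y ω)) μ :=
  ((hΦX.add hΦY).const_mul (6 * K)).mono'
    (hw.continuous_weightedSq.comp_aestronglyMeasurable (hX.add hY)) <| .of_forall fun ω => by
      rw [Real.norm_of_nonneg (hw.weightedSq_nonneg _)]
      exact hw.weightedSq_add_le (X ω) (Y ω)

lemma integrable_weightedSq_sum {ι : Type*} {s : Finset ι} {f : ι → Ω → ℝ}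
    (hf : ∀ i ∈ s, AEStronglyMeasurable (f i) μ)
    (hΦf : ∀ i ∈ s, Integrable (fun ω => weightedSq w (f i ω)) μ) :
    Integrable (fun ω => weightedSq w (∑ i ∈ s, f i ω)) μ := by
  classical
  induction s using Finset.induction_on with
  | empty => simp [weightedSq]
  | insert i s hi ih =>
    rw [Finset.forall_mem_insert] at hf hΦf
    simp only [Finset.sum_insert hi]
    exact hw.integrable_weightedSq_add hf.1 (Finset.aestronglyMeasurable_fun_sum s hf.2) hΦf.1
      (ih hf.2 hΦf.2)

lemma integrable_secondPrimitive (hX : AEStronglyMeasurable X μ)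
    (hΦX : Integrable (fun ω => weightedSq w (X ω)) μ) :
    Integrable (fun ω => secondPrimitive w (X ω)) μ :=
  hΦX.mono' ((continuous_secondPrimitive hw.continuous).comp_aestronglyMeasurable hX) <|
    .of_forall fun ω => by
      rw [Real.norm_of_nonneg (hw.secondPrimitive_nonneg _)]
      exact hw.secondPrimitive_le (X ω)

lemma integral_weightedSq_le (hX : AEStronglyMeasurable X μ)
    (hΦX : Integrable (fun ω => weightedSq w (X ω)) μ) :
    ∫ ω, weightedSq w (X ω) ∂μ ≤ 8 * K * ∫ ω, secondPrimitive w (X ω) ∂μ := by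
  rw [← integral_const_mul]
  exact integral_mono hΦX ((hw.integrable_secondPrimitive hX hΦX).const_mul _) fun ω =>
    hw.weightedSq_le_secondPrimitive (X ω)

lemma integral_mul_sq_le {t : ℝ} (ht : t ≠ 0)
    (hΦX : Integrable (fun ω => weightedSq w (X ω)) μ)
    (hYA : HasModularLE μ w (fun ω => Y ω / t) A) :
    ∫ ω, w (X ω) * Y ω ^ 2 ∂μ ≤ t ^ 2 * (∫ ω, weightedSq w (X ω) ∂μ + A) := by
  calc ∫ ω, w (X ω) * Y ω ^ 2 ∂μ
      ≤ ∫ ω, t ^ 2 * (weightedSq w (X ω) + weightedSq w (Y ω / t)) ∂μ :=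
        integral_mono_of_nonneg (.of_forall fun ω => mul_nonneg (hw.pos _).le (sq_nonneg _))
          ((hΦX.add hYA.integrable).const_mul _)
          (.of_forall fun ω => hw.mul_sq_le_sq_mul ht (X ω) (Y ω))
    _ = t ^ 2 * (∫ ω, weightedSq w (X ω) ∂μ + ∫ ω, weightedSq w (Y ω / t) ∂μ) := by
        rw [integral_const_mul, integral_add hΦX hYA.integrable]
    _ ≤ _ := by gcongr; exact hYA.integral_le

end IsDoublingWeight

end Modular

section Conditional

variable {Ω : Type*} {m mΩ : MeasurableSpace Ω} {μ : Measure Ω} {w : ℝ → ℝ} {K : ℝ}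

lemma integral_mul_condExp_of_stronglyMeasurable (hm : m ≤ mΩ) [SigmaFinite (μ.trim hm)]
    {f g : Ω → ℝ} (hf : StronglyMeasurable[m] f) (hg : Integrable g μ)
    (hfg : Integrable (fun ω => f ω * g ω) μ) :
    ∫ ω, f ω * μ[g | m] ω ∂μ = ∫ ω, f ω * g ω ∂μ := by
  rw [← integral_condExp hm (f := fun ω => f ω * g ω)]
  exact integral_congr_ae (condExp_mul_of_stronglyMeasurable_left hf hfg hg).symm

lemma condExp_div_const (f : Ω → ℝ) (c : ℝ) :
    μ[fun ω => f ω / c | m] =ᵐ[μ] fun ω => μ[f | m] ω / c := by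
  have h := condExp_smul (μ := μ) c⁻¹ f m
  simpa only [Pi.smul_def, smul_eq_mul, inv_mul_eq_div] using h

namespace IsDoublingWeight

variable (hw : IsDoublingWeight w K) (hm : m ≤ mΩ) [SigmaFinite (μ.trim hm)] {X Y : Ω → ℝ}
include hw hm

lemma integral_secondPrimitive_add_le (hX : StronglyMeasurable[m] X) (hY : Integrable Y μ)
    (hY0 : μ[Y | m] =ᵐ[μ] 0) (hΦX : Integrable (fun ω => weightedSq w (X ω)) μ)
    (hΦY : Integrable (fun ω => weightedSq w (Y ω)) μ) :
    ∫ ω, secondPrimitive w (X ω + Y ω) ∂μ ≤ ∫ ω, secondPrimitive w (X ω) ∂μ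
      + K / 2 * (∫ ω, w (X ω) * Y ω ^ 2 ∂μ + ∫ ω, weightedSq w (Y ω) ∂μ) := by
  have hXm := (hX.mono hm).aestronglyMeasurable (μ := μ)
  have hYm := hY.aestronglyMeasurable
  set G : Ω → ℝ := fun ω => ∫ s in (0 : ℝ)..X ω, w s
  have hG : StronglyMeasurable[m] G :=
    (intervalIntegral.continuous_primitive hw.continuous.intervalIntegrable 0)
      |>.comp_stronglyMeasurable hX
  have hGY : Integrable (fun ω => G ω * Y ω) μ :=
    ((hΦX.add hΦY).const_mul 2).mono' ((hG.mono hm).aestronglyMeasurable.mul hYm) <|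
      .of_forall fun ω => hw.abs_integral_mul_le (X ω) (Y ω)
  have hcancel : ∫ ω, G ω * Y ω ∂μ = 0 := by
    rw [← integral_mul_condExp_of_stronglyMeasurable hm hG hY hGY]
    exact integral_eq_zero_of_ae (hY0.mono fun ω hω => by simp [hω])
  have hF := hw.integrable_secondPrimitive hXm hΦX
  have hQ := hw.integrable_mul_sq hXm hYm hΦX hΦY
  calc ∫ ω, secondPrimitive w (X ω + Y ω) ∂μ
      ≤ ∫ ω, (secondPrimitive w (X ω) + G ω * Y ω
          + K / 2 * (w (X ω) * Y ω ^ 2 + weightedSq w (Y ω))) ∂μ :=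
        integral_mono
          (hw.integrable_secondPrimitive (hXm.add hYm)
            (hw.integrable_weightedSq_add hXm hYm hΦX hΦY))
          ((hF.add hGY).add ((hQ.add hΦY).const_mul _))
          fun ω => hw.secondPrimitive_add_le (X ω) (Y ω)
    _ = ∫ ω, (secondPrimitive w (X ω) + G ω * Y ω) ∂μ
          + ∫ ω, K / 2 * (w (X ω) * Y ω ^ 2 + weightedSq w (Y ω)) ∂μ :=
        integral_add (hF.add hGY) ((hQ.add hΦY).const_mul _)
    _ = _ := by
        rw [integral_add hF hGY, hcancel, add_zero, integral_const_mul, integral_add hQ hΦY]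

lemma integral_mul_sq_le_of_condExp {t A : ℝ} {V : Ω → ℝ} (ht : t ≠ 0)
    (hX : StronglyMeasurable[m] X) (hY : AEStronglyMeasurable Y μ)
    (hΦX : Integrable (fun ω => weightedSq w (X ω)) μ)
    (hΦY : Integrable (fun ω => weightedSq w (Y ω)) μ)
    (hV : μ[fun ω => Y ω ^ 2 | m] =ᵐ[μ] V) (hA : HasModularLE μ w (fun ω => √(V ω) / t) A) :
    ∫ ω, w (X ω) * Y ω ^ 2 ∂μ ≤ t ^ 2 * (∫ ω, weightedSq w (X ω) ∂μ + A) := by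
  have hXm := (hX.mono hm).aestronglyMeasurable (μ := μ)
  calc ∫ ω, w (X ω) * Y ω ^ 2 ∂μ = ∫ ω, w (X ω) * μ[fun ω => Y ω ^ 2 | m] ω ∂μ :=
        (integral_mul_condExp_of_stronglyMeasurable hm (hw.continuous.comp_stronglyMeasurable hX)
          (hw.integrable_sq hY hΦY) (hw.integrable_mul_sq hXm hY hΦX hΦY)).symm
    _ = ∫ ω, w (X ω) * √(V ω) ^ 2 ∂μ := by
        have hnonneg : 0 ≤ᵐ[μ] μ[fun ω => Y ω ^ 2 | m] :=
          condExp_nonneg (.of_forall fun ω => sq_nonneg (Y ω))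
        refine integral_congr_ae ?_
        filter_upwards [hV, hnonneg] with ω hω h0
        rw [Real.sq_sqrt (hω ▸ h0), hω]
    _ ≤ _ := hw.integral_mul_sq_le ht hΦX hA

end IsDoublingWeight

end Conditional

section RunningMax

/-- The maximum of `0, |x 0|, …, |x (k - 1)|`; at time `k` it is a predictable quantity. -/
def runningMax (x : ℕ → ℝ) : ℕ → ℝ
  | 0 => 0
  | k + 1 => max (runningMax x k) |x k|

variable {w : ℝ → ℝ} {K : ℝ} {x : ℕ → ℝ} {D : ℝ} {n : ℕ}

lemma runningMax_nonneg (x : ℕ → ℝ) : ∀ k, 0 ≤ runningMax x k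
  | 0 => le_rfl
  | k + 1 => (runningMax_nonneg x k).trans (le_max_left _ _)

lemma runningMax_le (hD : 0 ≤ D) (h : ∀ k < n, |x k| ≤ D) : ∀ k ≤ n, runningMax x k ≤ D
  | 0, _ => hD
  | k + 1, hk => max_le (runningMax_le hD h k (Nat.le_of_succ_le hk)) (h k hk)

lemma stronglyMeasurable_runningMax {Ω : Type*} {m : MeasurableSpace Ω} {e : ℕ → Ω → ℝ} :
    ∀ {k : ℕ}, (∀ j < k, StronglyMeasurable[m] (e j)) →
      StronglyMeasurable[m] fun ω => runningMax (fun j => e j ω) k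
  | 0, _ => stronglyMeasurable_const
  | k + 1, h => (stronglyMeasurable_runningMax fun j hj => h j (hj.trans k.lt_succ_self)).sup
      (continuous_abs.comp_stronglyMeasurable (h k k.lt_succ_self))

-- `Φ(x k) ≤ w(R (k + 1)) (x k)² ≤ w(R k) (x k)² + (w(R (k + 1)) - w(R k)) D²` telescopes.
lemma IsDoublingWeight.sum_weightedSq_le (hw : IsDoublingWeight w K) (h : ∀ k < n, |x k| ≤ |D|) :
    ∑ k ∈ Finset.range n, weightedSq w (x k)
      ≤ ∑ k ∈ Finset.range n, w (runningMax x k) * x k ^ 2 + weightedSq w D := by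
  have hterm : ∀ k ∈ Finset.range n, weightedSq w (x k) ≤ w (runningMax x k) * x k ^ 2
      + (w (runningMax x (k + 1)) * D ^ 2 - w (runningMax x k) * D ^ 2) := by
    intro k hk
    have hsq : x k ^ 2 ≤ D ^ 2 := sq_le_sq.mpr (h k (Finset.mem_range.mp hk))
    have hR := abs_of_nonneg (runningMax_nonneg x (k + 1))
    have hxR : w (x k) ≤ w (runningMax x (k + 1)) :=
      hw.le_of_abs_le (hR.symm ▸ le_max_right _ _)
    have hRR : w (runningMax x k) ≤ w (runningMax x (k + 1)) := hw.le_of_abs_le <| by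
      rw [hR, abs_of_nonneg (runningMax_nonneg x k)]
      exact le_max_left _ _
    calc w (x k) * x k ^ 2 ≤ w (runningMax x (k + 1)) * x k ^ 2 := by gcongr
      _ ≤ _ := by nlinarith [mul_le_mul_of_nonneg_left hsq (sub_nonneg.mpr hRR)]
  have hlast : w (runningMax x n) ≤ w D := hw.le_of_abs_le <| by
    rw [abs_of_nonneg (runningMax_nonneg x n)]
    exact runningMax_le (abs_nonneg D) h n le_rfl
  calc _ ≤ ∑ k ∈ Finset.range n, (w (runningMax x k) * x k ^ 2
          + (w (runningMax x (k + 1)) * D ^ 2 - w (runningMax x k) * D ^ 2)) :=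
        Finset.sum_le_sum hterm
    _ = ∑ k ∈ Finset.range n, w (runningMax x k) * x k ^ 2
          + (w (runningMax x n) * D ^ 2 - w (runningMax x 0) * D ^ 2) := by
        rw [Finset.sum_add_distrib, Finset.sum_range_sub fun k => w (runningMax x k) * D ^ 2]
    _ ≤ _ := by
        have := mul_le_mul_of_nonneg_right hlast (sq_nonneg D)
        have := mul_nonneg (hw.pos (runningMax x 0)).le (sq_nonneg D)
        unfold weightedSq
        linarith

end RunningMax

section MartingaleDiff

variable {Ω : Type*} {mΩ : MeasurableSpace Ω} {μ : Measure Ω} {ℱ : Filtration ℕ mΩ} {n : ℕ}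
  {e : ℕ → Ω → ℝ}

/-- `e 0, …, e (n - 1)` are martingale differences, with `e k` the increment from time `k` to
time `k + 1`. -/
structure IsMartingaleDiff (ℱ : Filtration ℕ mΩ) (μ : Measure Ω) (n : ℕ) (e : ℕ → Ω → ℝ) :
    Prop where
  stronglyMeasurable : ∀ k < n, StronglyMeasurable[ℱ (k + 1)] (e k)
  integrable : ∀ k < n, Integrable (e k) μ
  condExp_eq_zero : ∀ k < n, μ[e k | ℱ k] =ᵐ[μ] 0

namespace IsMartingaleDiff

variable (he : IsMartingaleDiff ℱ μ n e)
include he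

lemma stronglyMeasurable_of_lt {j k : ℕ} (hjk : j < k) (hk : k ≤ n) :
    StronglyMeasurable[ℱ k] (e j) :=
  (he.stronglyMeasurable j (hjk.trans_le hk)).mono (ℱ.mono hjk)

lemma stronglyMeasurable_sum {k : ℕ} (hk : k ≤ n) :
    StronglyMeasurable[ℱ k] fun ω => ∑ j ∈ Finset.range k, e j ω :=
  Finset.stronglyMeasurable_fun_sum _ fun _ hj =>
    he.stronglyMeasurable_of_lt (Finset.mem_range.mp hj) hk

lemma div_const (c : ℝ) : IsMartingaleDiff ℱ μ n fun k ω => e k ω / c where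
  stronglyMeasurable k hk := by
    simpa only [div_eq_inv_mul] using (he.stronglyMeasurable k hk).const_mul c⁻¹
  integrable k hk := (he.integrable k hk).div_const c
  condExp_eq_zero k hk := (condExp_div_const (e k) c).trans <|
    (he.condExp_eq_zero k hk).mono fun ω hω => by simp [hω]

end IsMartingaleDiff

/-- The constant produced by Grönwall's inequality in
`IsDoublingWeight.hasModularLE_sum_of_integral_mul_sq_le`. -/
def growthConst (K : ℝ) : ℝ := 4 * K ^ 2 * Real.exp (4 * K ^ 2)

lemma one_le_growthConst {K : ℝ} (hK : 1 ≤ K) : 1 ≤ growthConst K :=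
  one_le_mul_of_one_le_of_one_le (by nlinarith) (Real.one_le_exp (by positivity))

namespace IsDoublingWeight

variable {w : ℝ → ℝ} {K : ℝ} [SigmaFiniteFiltration μ ℱ]
  (hw : IsDoublingWeight w K) (he : IsMartingaleDiff ℱ μ n e)
include hw he

omit [SigmaFiniteFiltration μ ℱ] in
lemma integrable_weightedSq_sum_range
    (hΦ : ∀ k < n, Integrable (fun ω => weightedSq w (e k ω)) μ) {k : ℕ} (hk : k ≤ n) :
    Integrable (fun ω => weightedSq w (∑ j ∈ Finset.range k, e j ω)) μ :=
  hw.integrable_weightedSq_sum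
    (fun j hj => (he.integrable j ((Finset.mem_range.mp hj).trans_le hk)).aestronglyMeasurable)
    fun j hj => hΦ j ((Finset.mem_range.mp hj).trans_le hk)

lemma hasModularLE_sum_of_integral_mul_sq_le {c : ℕ → ℝ} {A B : ℝ}
    (hΦ : ∀ k < n, Integrable (fun ω => weightedSq w (e k ω)) μ)
    (hA : 0 ≤ A) (hc : ∀ k < n, 0 ≤ c k) (hc1 : ∑ k ∈ Finset.range n, c k ≤ 1)
    (hQ : ∀ k < n, ∫ ω, w (∑ j ∈ Finset.range k, e j ω) * e k ω ^ 2 ∂μ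
      ≤ c k * (∫ ω, weightedSq w (∑ j ∈ Finset.range k, e j ω) ∂μ + A))
    (hB : ∑ k ∈ Finset.range n, ∫ ω, weightedSq w (e k ω) ∂μ ≤ B) :
    HasModularLE μ w (fun ω => ∑ k ∈ Finset.range n, e k ω) (growthConst K * (A + B)) := by
  set S : ℕ → Ω → ℝ := fun k ω => ∑ j ∈ Finset.range k, e j ω
  have hK := hw.one_le
  have hS : ∀ k ≤ n, AEStronglyMeasurable (S k) μ := fun k hk =>
    ((he.stronglyMeasurable_sum hk).mono (ℱ.le k)).aestronglyMeasurable
  have hΦS : ∀ k ≤ n, Integrable (fun ω => weightedSq w (S k ω)) μ := fun k hk =>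
    hw.integrable_weightedSq_sum_range he hΦ hk
  set u : ℕ → ℝ := fun k => ∫ ω, secondPrimitive w (S k ω) ∂μ
  set b : ℕ → ℝ := fun k => ∫ ω, weightedSq w (e k ω) ∂μ
  have hΦu : ∀ k ≤ n, ∫ ω, weightedSq w (S k ω) ∂μ ≤ 8 * K * u k := fun k hk =>
    hw.integral_weightedSq_le (hS k hk) (hΦS k hk)
  have hstep : ∀ k < n, u (k + 1) ≤ (1 + 4 * K ^ 2 * c k) * u k + K / 2 * (c k * A + b k) := by
    intro k hk
    have hone := hw.integral_secondPrimitive_add_le (ℱ.le k) (he.stronglyMeasurable_sum hk.le)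
      (he.integrable k hk) (he.condExp_eq_zero k hk) (hΦS k hk.le) (hΦ k hk)
    simp only [← Finset.sum_range_succ] at hone
    calc u (k + 1) ≤ u k + K / 2 * (c k * (8 * K * u k + A) + b k) := by
          refine hone.trans ?_
          gcongr
          exact (hQ k hk).trans (by gcongr; exacts [hc k hk, hΦu k hk.le])
      _ = _ := by ring
  have hu0 : u 0 = 0 := by simp [u, S, secondPrimitive]
  have hb : ∀ k, 0 ≤ b k := fun k => integral_nonneg fun ω => hw.weightedSq_nonneg (e k ω)
  have hgronwall := le_mul_exp_sum_of_le_one_add_mul hu0.ge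
    (fun k hk => mul_nonneg (by positivity) (add_nonneg (mul_nonneg (hc k hk) hA) (hb k)))
    (fun k hk => mul_nonneg (by positivity) (hc k hk)) hstep
  rw [hu0, zero_add, ← Finset.mul_sum, ← Finset.mul_sum, Finset.sum_add_distrib,
    ← Finset.sum_mul] at hgronwall
  have hB0 : 0 ≤ B := (Finset.sum_nonneg fun k _ => hb k).trans hB
  refine ⟨hΦS n le_rfl, (hΦu n le_rfl).trans ?_⟩
  calc 8 * K * u n ≤ 8 * K * (K / 2 * (1 * A + B) * Real.exp (4 * K ^ 2 * 1)) := by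
        refine mul_le_mul_of_nonneg_left (hgronwall.trans ?_) (by positivity)
        gcongr
    _ = growthConst K * (A + B) := by rw [growthConst, mul_one]; ring

lemma hasModularLE_sum {t : ℕ → ℝ} {A : ℝ} (hA : 0 ≤ A) (ht0 : ∀ k < n, t k ≠ 0)
    (ht : ∑ k ∈ Finset.range n, t k ^ 2 ≤ 1)
    (hmod : ∀ k < n, HasModularLE μ w (fun ω => e k ω / t k) A) :
    HasModularLE μ w (fun ω => ∑ k ∈ Finset.range n, e k ω) (growthConst K * (2 * A)) := by
  have hmod' : ∀ k < n, HasModularLE μ w (e k) (t k ^ 2 * A) := by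
    intro k hk
    have htk : |t k| ≤ 1 := (sq_le_one_iff_abs_le_one _).mp <|
      (Finset.single_le_sum (fun j _ => sq_nonneg (t j)) (Finset.mem_range.mpr hk)).trans ht
    have hmeas := ((he.div_const (t k)).integrable k hk).aestronglyMeasurable
    simpa only [mul_div_cancel₀ _ (ht0 k hk)] using hw.hasModularLE_const_mul htk hmeas (hmod k hk)
  have heΦ : ∀ k < n, Integrable (fun ω => weightedSq w (e k ω)) μ := fun k hk =>
    (hmod' k hk).integrable
  rw [two_mul]
  refine hw.hasModularLE_sum_of_integral_mul_sq_le he heΦ hA (fun k _ => sq_nonneg (t k)) ht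
    (fun k hk => hw.integral_mul_sq_le (ht0 k hk)
      (hw.integrable_weightedSq_sum_range he heΦ hk.le) (hmod k hk)) ?_
  calc ∑ k ∈ Finset.range n, ∫ ω, weightedSq w (e k ω) ∂μ
      ≤ ∑ k ∈ Finset.range n, t k ^ 2 * A :=
        Finset.sum_le_sum fun k hk => (hmod' k (Finset.mem_range.mp hk)).integral_le
    _ ≤ A := by
        rw [← Finset.sum_mul]
        exact mul_le_of_le_one_left hA ht

lemma sum_integral_weightedSq_le {t : ℕ → ℝ} {A B : ℝ} {D : Ω → ℝ} {V : ℕ → Ω → ℝ}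
    (hD : HasModularLE μ w D B) (hle : ∀ᵐ ω ∂μ, ∀ k < n, |e k ω| ≤ |D ω|)
    (hV : ∀ k < n, μ[fun ω => e k ω ^ 2 | ℱ k] =ᵐ[μ] V k) (ht0 : ∀ k < n, t k ≠ 0)
    (hmod : ∀ k < n, HasModularLE μ w (fun ω => √(V k ω) / t k) A) :
    ∑ k ∈ Finset.range n, ∫ ω, weightedSq w (e k ω) ∂μ
      ≤ ∑ k ∈ Finset.range n, t k ^ 2 * (B + A) + B := by
  set R : ℕ → Ω → ℝ := fun k ω => runningMax (fun j => e j ω) k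
  have hem : ∀ k < n, AEStronglyMeasurable (e k) μ := fun k hk =>
    (he.integrable k hk).aestronglyMeasurable
  have hR : ∀ k < n, StronglyMeasurable[ℱ k] (R k) := fun k hk =>
    stronglyMeasurable_runningMax fun j hj => he.stronglyMeasurable_of_lt hj hk.le
  have hRm : ∀ k < n, AEStronglyMeasurable (R k) μ := fun k hk =>
    ((hR k hk).mono (ℱ.le k)).aestronglyMeasurable
  have hRB : ∀ k < n, HasModularLE μ w (R k) B := fun k hk =>
    hw.hasModularLE_of_abs_le hD (hRm k hk) <| hle.mono fun ω hω => by
      rw [abs_of_nonneg (runningMax_nonneg _ k)]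
      exact runningMax_le (abs_nonneg _) hω k hk.le
  have heΦ : ∀ k < n, Integrable (fun ω => weightedSq w (e k ω)) μ := fun k hk =>
    (hw.hasModularLE_of_abs_le hD (hem k hk) (hle.mono fun ω hω => hω k hk)).integrable
  have hQ : ∀ k < n, Integrable (fun ω => w (R k ω) * e k ω ^ 2) μ := fun k hk =>
    hw.integrable_mul_sq (hRm k hk) (hem k hk) (hRB k hk).integrable (heΦ k hk)
  calc ∑ k ∈ Finset.range n, ∫ ω, weightedSq w (e k ω) ∂μ
      = ∫ ω, ∑ k ∈ Finset.range n, weightedSq w (e k ω) ∂μ :=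
        (integral_finsetSum _ fun k hk => heΦ k (Finset.mem_range.mp hk)).symm
    _ ≤ ∫ ω, (∑ k ∈ Finset.range n, w (R k ω) * e k ω ^ 2 + weightedSq w (D ω)) ∂μ :=
        integral_mono_ae (integrable_finsetSum _ fun k hk => heΦ k (Finset.mem_range.mp hk))
          ((integrable_finsetSum _ fun k hk => hQ k (Finset.mem_range.mp hk)).add hD.integrable)
          (hle.mono fun ω hω => hw.sum_weightedSq_le hω)
    _ = ∑ k ∈ Finset.range n, ∫ ω, w (R k ω) * e k ω ^ 2 ∂μ + ∫ ω, weightedSq w (D ω) ∂μ := by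
        rw [integral_add (integrable_finsetSum _ fun k hk => hQ k (Finset.mem_range.mp hk))
          hD.integrable, integral_finsetSum _ fun k hk => hQ k (Finset.mem_range.mp hk)]
    _ ≤ _ := by
        refine add_le_add (Finset.sum_le_sum fun k hk => ?_) hD.integral_le
        rw [Finset.mem_range] at hk
        refine (hw.integral_mul_sq_le_of_condExp (ℱ.le k) (ht0 k hk) (hR k hk) (hem k hk)
          (hRB k hk).integrable (heΦ k hk) (hV k hk) (hmod k hk)).trans ?_
        gcongr
        exact (hRB k hk).integral_le

lemma hasModularLE_sum_of_condExp {t : ℕ → ℝ} {A B : ℝ} {D : Ω → ℝ} {V : ℕ → Ω → ℝ} (hA : 0 ≤ A)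
    (hD : HasModularLE μ w D B) (hle : ∀ᵐ ω ∂μ, ∀ k < n, |e k ω| ≤ |D ω|)
    (hV : ∀ k < n, μ[fun ω => e k ω ^ 2 | ℱ k] =ᵐ[μ] V k) (ht0 : ∀ k < n, t k ≠ 0)
    (ht : ∑ k ∈ Finset.range n, t k ^ 2 ≤ 1)
    (hmod : ∀ k < n, HasModularLE μ w (fun ω => √(V k ω) / t k) A) :
    HasModularLE μ w (fun ω => ∑ k ∈ Finset.range n, e k ω) (growthConst K * (2 * (A + B))) := by
  have hem : ∀ k < n, AEStronglyMeasurable (e k) μ := fun k hk =>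
    (he.integrable k hk).aestronglyMeasurable
  have heΦ : ∀ k < n, Integrable (fun ω => weightedSq w (e k ω)) μ := fun k hk =>
    (hw.hasModularLE_of_abs_le hD (hem k hk) (hle.mono fun ω hω => hω k hk)).integrable
  have hB0 : 0 ≤ B := (integral_nonneg fun ω => hw.weightedSq_nonneg (D ω)).trans hD.integral_le
  rw [show 2 * (A + B) = A + (B + A + B) by ring]
  refine hw.hasModularLE_sum_of_integral_mul_sq_le he heΦ hA (fun k _ => sq_nonneg (t k)) ht
    (fun k hk => hw.integral_mul_sq_le_of_condExp (ℱ.le k) (ht0 k hk)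
      (he.stronglyMeasurable_sum hk.le) (hem k hk)
      (hw.integrable_weightedSq_sum_range he heΦ hk.le) (heΦ k hk) (hV k hk) (hmod k hk)) ?_
  refine (hw.sum_integral_weightedSq_le he hD hle hV ht0 hmod).trans ?_
  rw [← Finset.sum_mul]
  gcongr
  exact mul_le_of_le_one_left (add_nonneg hB0 hA) ht

end IsDoublingWeight

end MartingaleDiff

section Orlicz

variable {Ω : Type*} {mΩ : MeasurableSpace Ω} {μ : Measure Ω} {r : ℝ} {X : Ω → ℝ}

lemma exists_lintegral_phiYoung_le_one {p t : ℝ} (h : orliczNorm μ p r X < ENNReal.ofReal t) :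
    ∃ l : ℝ, 0 < l ∧ l < t ∧ ∫⁻ ω, ENNReal.ofReal (phiYoung p r (|X ω| / l)) ∂μ ≤ 1 := by
  obtain ⟨l, ⟨hl0, hltop, hint⟩, hlt⟩ := sInf_lt_iff.mp h
  exact ⟨l.toReal, ENNReal.toReal_pos hl0.ne' hltop.ne,
    (ENNReal.lt_ofReal_iff_toReal_lt hltop.ne).mp hlt, hint⟩

lemma phiYoung_two_abs_div {l : ℝ} (hl : 0 < l) (x : ℝ) :
    phiYoung 2 r (|x| / l) = weightedSq (logWeight r) (x / l) := by
  rw [← phiYoung_two_abs, abs_div, abs_of_pos hl]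

lemma hasModularLE_div_of_orliczNorm_two_lt {t : ℝ} (hr : 0 ≤ r) (hX : AEStronglyMeasurable X μ)
    (h : orliczNorm μ 2 r X < ENNReal.ofReal t) :
    HasModularLE μ (logWeight r) (fun ω => X ω / t) 1 := by
  have hw := isDoublingWeight_logWeight hr
  obtain ⟨l, hl0, hlt, hint⟩ := exists_lintegral_phiYoung_le_one h
  rw [hw.hasModularLE_iff_lintegral_le (hX.aemeasurable.div_const t).aestronglyMeasurable
    zero_le_one, ENNReal.ofReal_one]
  refine (lintegral_mono fun ω => ENNReal.ofReal_le_ofReal ?_).trans hint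
  rw [phiYoung_two_abs_div hl0]
  refine hw.weightedSq_le_of_abs_le ?_
  rw [abs_div, abs_div, abs_of_pos hl0, abs_of_pos (hl0.trans hlt)]
  gcongr

lemma hasModularLE_sqrt_div_of_orliczNorm_one_lt {t : ℝ} (hr : 0 ≤ r)
    (hX : AEStronglyMeasurable X μ) (h : orliczNorm μ 1 r X < ENNReal.ofReal t) :
    HasModularLE μ (logWeight r) (fun ω => √(X ω) / √t) (2 ^ r) := by
  have hw := isDoublingWeight_logWeight hr
  obtain ⟨l, hl0, hlt, hint⟩ := exists_lintegral_phiYoung_le_one h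
  have hsqrt : AEStronglyMeasurable (fun ω => √(X ω) / √t) μ :=
    (hX.aemeasurable.sqrt.div_const _).aestronglyMeasurable
  have hle : ∀ ω, weightedSq (logWeight r) (√(X ω) / √t)
      ≤ 2 ^ r * phiYoung 1 r (|X ω| / l) := fun ω => by
    refine le_trans ?_ ((weightedSq_logWeight_sqrt_le hr (X ω / l)).trans_eq ?_)
    · refine hw.weightedSq_le_of_abs_le ?_
      rw [Real.sqrt_div' _ hl0.le, abs_of_nonneg (by positivity), abs_of_nonneg (by positivity)]
      gcongr
    · rw [abs_div, abs_of_pos hl0]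
  rw [hw.hasModularLE_iff_lintegral_le hsqrt (by positivity)]
  calc ∫⁻ ω, ENNReal.ofReal (weightedSq (logWeight r) (√(X ω) / √t)) ∂μ
      ≤ ∫⁻ ω, ENNReal.ofReal (2 ^ r) * ENNReal.ofReal (phiYoung 1 r (|X ω| / l)) ∂μ :=
        lintegral_mono fun ω => by
          rw [← ENNReal.ofReal_mul (by positivity)]
          exact ENNReal.ofReal_le_ofReal (hle ω)
    _ = ENNReal.ofReal (2 ^ r) * ∫⁻ ω, ENNReal.ofReal (phiYoung 1 r (|X ω| / l)) ∂μ :=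
        lintegral_const_mul' _ _ ENNReal.ofReal_ne_top
    _ ≤ ENNReal.ofReal (2 ^ r) := mul_le_of_le_one_right' hint

lemma orliczNorm_two_le_of_hasModularLE {l : ℝ} (hr : 0 ≤ r) (hl : 0 < l)
    (hX : AEStronglyMeasurable X μ) (h : HasModularLE μ (logWeight r) (fun ω => X ω / l) 1) :
    orliczNorm μ 2 r X ≤ ENNReal.ofReal l := by
  refine sInf_le ⟨ENNReal.ofReal_pos.mpr hl, ENNReal.ofReal_lt_top, ?_⟩
  rw [ENNReal.toReal_ofReal hl.le, ← ENNReal.ofReal_one]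
  simp_rw [phiYoung_two_abs_div hl]
  exact ((isDoublingWeight_logWeight hr).hasModularLE_iff_lintegral_le
    (hX.aemeasurable.div_const l).aestronglyMeasurable zero_le_one).mp h

lemma orliczNorm_two_sq_le_of_hasModularLE {A T : ℝ} (hr : 0 ≤ r) (hA : 1 ≤ A) (hT : 0 < T)
    (hX : AEStronglyMeasurable X μ)
    (h : HasModularLE μ (logWeight r) (fun ω => X ω / √T) A) :
    orliczNorm μ 2 r X ^ 2 ≤ ENNReal.ofReal (A * T) := by
  have hA0 : 0 < A := zero_lt_one.trans_le hA
  have hc : |(√A)⁻¹| ≤ 1 := by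
    rw [abs_of_nonneg (by positivity)]
    exact inv_le_one_of_one_le₀ (Real.one_le_sqrt.mpr hA)
  have hmod := (isDoublingWeight_logWeight hr).hasModularLE_const_mul hc
    (hX.aemeasurable.div_const _).aestronglyMeasurable h
  rw [inv_pow, Real.sq_sqrt hA0.le, inv_mul_cancel₀ hA0.ne'] at hmod
  have hnorm : orliczNorm μ 2 r X ≤ ENNReal.ofReal √(A * T) :=
    orliczNorm_two_le_of_hasModularLE hr (by positivity) hX <| by
      convert! hmod using 2 with ω
      rw [Real.sqrt_mul hA0.le, inv_mul_eq_div, div_div, mul_comm]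
  calc orliczNorm μ 2 r X ^ 2 ≤ ENNReal.ofReal √(A * T) ^ 2 := by gcongr
    _ = ENNReal.ofReal (A * T) := by
      rw [← ENNReal.ofReal_pow (Real.sqrt_nonneg _), Real.sq_sqrt (by positivity)]

end Orlicz

lemma le_ofReal_mul_sq_add_sum_of_forall_lt {n : ℕ} {c : ℝ} {a b : ℝ≥0∞} {N : ℕ → ℝ≥0∞}
    (hc : 0 < c)
    (h : ∀ (p : ℝ) (q : ℕ → ℝ), b < ENNReal.ofReal p → (∀ k < n, N k < ENNReal.ofReal (q k)) →
      a ≤ ENNReal.ofReal (c * (p ^ 2 + ∑ k ∈ Finset.range n, q k))) :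
    a ≤ ENNReal.ofReal c * (b ^ 2 + ∑ k ∈ Finset.range n, N k) := by
  by_cases hb : b = ⊤
  · simp [hb, ENNReal.mul_top, hc]
  by_cases hN : ∑ k ∈ Finset.range n, N k = ⊤
  · simp [hN, ENNReal.mul_top, hc]
  replace hN : ∀ k < n, N k ≠ ⊤ := fun k hk =>
    ENNReal.sum_ne_top.mp hN k (Finset.mem_range.mpr hk)
  have hbound : ∀ δ > 0, a ≤ ENNReal.ofReal
      (c * ((b.toReal + δ) ^ 2 + ∑ k ∈ Finset.range n, ((N k).toReal + δ))) := fun δ hδ =>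
    h _ _ ((ENNReal.lt_ofReal_iff_toReal_lt hb).mpr (lt_add_of_pos_right _ hδ)) fun k hk =>
      (ENNReal.lt_ofReal_iff_toReal_lt (hN k hk)).mpr (lt_add_of_pos_right _ hδ)
  have hlim : a ≤ ENNReal.ofReal
      (c * ((b.toReal + 0) ^ 2 + ∑ k ∈ Finset.range n, ((N k).toReal + 0))) := by
    refine ge_of_tendsto (x := nhdsWithin (0 : ℝ) (Set.Ioi 0)) ?_
      (eventually_mem_nhdsWithin.mono hbound)
    exact (ENNReal.continuous_ofReal.comp (by fun_prop)).tendsto 0 |>.mono_left nhdsWithin_le_nhds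
  refine hlim.trans_eq ?_
  simp only [add_zero]
  rw [ENNReal.ofReal_mul hc.le, ENNReal.ofReal_add (by positivity) (by positivity),
    ENNReal.ofReal_pow ENNReal.toReal_nonneg, ENNReal.ofReal_toReal hb,
    ENNReal.ofReal_sum_of_nonneg fun _ _ => ENNReal.toReal_nonneg]
  congr 2
  exact Finset.sum_congr rfl fun k hk => ENNReal.ofReal_toReal (hN k (Finset.mem_range.mp hk))

section Inequalities

variable {Ω : Type*} {mΩ : MeasurableSpace Ω} {μ : Measure Ω} {ℱ : Filtration ℕ mΩ}
  [SigmaFiniteFiltration μ ℱ] {n : ℕ} {e : ℕ → Ω → ℝ} {D : Ω → ℝ} {r : ℝ}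

/-- The constant in the Burkholder-type inequality `IsMartingaleDiff.orliczNorm_sum_sq_le`. -/
def burkholderConst (r : ℝ) : ℝ := growthConst (2 ^ r) * (2 * 1)

/-- The constant in the Rosenthal-type inequality
`IsMartingaleDiff.orliczNorm_sum_sq_le_of_abs_le`. -/
def rosenthalConst (r : ℝ) : ℝ := growthConst (2 ^ r) * (2 * (2 ^ r + 1))

lemma one_le_burkholderConst (hr : 0 ≤ r) : 1 ≤ burkholderConst r :=
  one_le_mul_of_one_le_of_one_le
    (one_le_growthConst (isDoublingWeight_logWeight hr).one_le) (by norm_num)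

lemma one_le_rosenthalConst (hr : 0 ≤ r) : 1 ≤ rosenthalConst r :=
  one_le_mul_of_one_le_of_one_le
    (one_le_growthConst (isDoublingWeight_logWeight hr).one_le)
    (by linarith [(isDoublingWeight_logWeight hr).one_le])

namespace IsMartingaleDiff

variable (hr : 0 ≤ r) (he : IsMartingaleDiff ℱ μ n e)
include hr he

omit hr [SigmaFiniteFiltration μ ℱ] in
lemma aestronglyMeasurable_sum :
    AEStronglyMeasurable (fun ω => ∑ k ∈ Finset.range n, e k ω) μ :=
  ((he.stronglyMeasurable_sum le_rfl).mono (ℱ.le n)).aestronglyMeasurable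

lemma orliczNorm_sum_sq_le_of_lt {a : ℕ → ℝ} {T : ℝ} (hT : 0 < T)
    (ha : ∀ k < n, orliczNorm μ 2 r (e k) < ENNReal.ofReal (a k))
    (haT : ∑ k ∈ Finset.range n, a k ^ 2 ≤ T) :
    orliczNorm μ 2 r (fun ω => ∑ k ∈ Finset.range n, e k ω) ^ 2
      ≤ ENNReal.ofReal (burkholderConst r * T) := by
  have ha0 : ∀ k < n, 0 < a k := fun k hk => ENNReal.ofReal_pos.mp (bot_le.trans_lt (ha k hk))
  refine orliczNorm_two_sq_le_of_hasModularLE hr (one_le_burkholderConst hr) hT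
    he.aestronglyMeasurable_sum ?_
  simp_rw [Finset.sum_div]
  refine (isDoublingWeight_logWeight hr).hasModularLE_sum (he.div_const √T) zero_le_one
    (t := fun k => a k / √T) (fun k hk => (div_pos (ha0 k hk) (Real.sqrt_pos.mpr hT)).ne') ?_
    fun k hk => ?_
  · simp_rw [div_pow, Real.sq_sqrt hT.le]
    rwa [← Finset.sum_div, div_le_one hT]
  · simp_rw [div_div_div_cancel_right₀ (Real.sqrt_pos.mpr hT).ne']
    exact hasModularLE_div_of_orliczNorm_two_lt hr (he.integrable k hk).aestronglyMeasurable
      (ha k hk)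

lemma orliczNorm_sum_sq_le :
    orliczNorm μ 2 r (fun ω => ∑ k ∈ Finset.range n, e k ω) ^ 2
      ≤ ENNReal.ofReal (burkholderConst r) * ∑ k ∈ Finset.range n, orliczNorm μ 2 r (e k) ^ 2 := by
  have hlim := le_ofReal_mul_sq_add_sum_of_forall_lt (n := n) (b := 0)
    (N := fun k => orliczNorm μ 2 r (e k) ^ 2) (zero_lt_one.trans_le (one_le_burkholderConst hr))
    fun p q hp hq => by
      have hp0 : 0 < p := ENNReal.ofReal_pos.mp hp
      have hq0 : ∀ k < n, 0 < q k := fun k hk =>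
        ENNReal.ofReal_pos.mp (bot_le.trans_lt (hq k hk))
      have hsum : ∑ k ∈ Finset.range n, √(q k) ^ 2 = ∑ k ∈ Finset.range n, q k :=
        Finset.sum_congr rfl fun k hk => Real.sq_sqrt (hq0 k (Finset.mem_range.mp hk)).le
      have hT : 0 < p ^ 2 + ∑ k ∈ Finset.range n, q k := by
        rw [← hsum]
        positivity
      refine he.orliczNorm_sum_sq_le_of_lt hr hT (a := fun k => √(q k)) (fun k hk => ?_)
        (hsum.trans_le (le_add_of_nonneg_left (sq_nonneg p)))
      refine lt_of_pow_lt_pow_left' 2 ?_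
      rw [← ENNReal.ofReal_pow (Real.sqrt_nonneg _), Real.sq_sqrt (hq0 k hk).le]
      exact hq k hk
  simpa using hlim

lemma orliczNorm_sum_sq_le_of_abs_le_of_lt {p T : ℝ} {q : ℕ → ℝ} (hT : 0 < T)
    (hDm : AEStronglyMeasurable D μ) (hle : ∀ᵐ ω ∂μ, ∀ k < n, |e k ω| ≤ |D ω|)
    (hD : orliczNorm μ 2 r D < ENNReal.ofReal p)
    (hq : ∀ k < n, orliczNorm μ 1 r (μ[fun ω => e k ω ^ 2 | ℱ k]) < ENNReal.ofReal (q k))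
    (hpT : p ^ 2 ≤ T) (hqT : ∑ k ∈ Finset.range n, q k ≤ T) :
    orliczNorm μ 2 r (fun ω => ∑ k ∈ Finset.range n, e k ω) ^ 2
      ≤ ENNReal.ofReal (rosenthalConst r * T) := by
  have hq0 : ∀ k < n, 0 < q k := fun k hk => ENNReal.ofReal_pos.mp (bot_le.trans_lt (hq k hk))
  have hDT := hasModularLE_div_of_orliczNorm_two_lt hr hDm
    (hD.trans_le (ENNReal.ofReal_le_ofReal (Real.le_sqrt_of_sq_le hpT)))
  refine orliczNorm_two_sq_le_of_hasModularLE hr (one_le_rosenthalConst hr) hT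
    he.aestronglyMeasurable_sum ?_
  simp_rw [Finset.sum_div]
  refine (isDoublingWeight_logWeight hr).hasModularLE_sum_of_condExp (he.div_const √T)
    (by positivity) hDT ?_ (t := fun k => √(q k) / √T)
    (V := fun k ω => μ[fun ω => e k ω ^ 2 | ℱ k] ω / T) (fun k _ => ?_)
    (fun k hk => (div_pos (Real.sqrt_pos.mpr (hq0 k hk)) (Real.sqrt_pos.mpr hT)).ne') ?_
    fun k hk => ?_
  · filter_upwards [hle] with ω hω k hk
    rw [abs_div, abs_div]
    exact div_le_div_of_nonneg_right (hω k hk) (abs_nonneg _)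
  · simp_rw [div_pow, Real.sq_sqrt hT.le]
    exact condExp_div_const _ T
  · calc ∑ k ∈ Finset.range n, (√(q k) / √T) ^ 2 = (∑ k ∈ Finset.range n, q k) / T := by
          rw [Finset.sum_div]
          refine Finset.sum_congr rfl fun k hk => ?_
          rw [div_pow, Real.sq_sqrt hT.le, Real.sq_sqrt (hq0 k (Finset.mem_range.mp hk)).le]
      _ ≤ 1 := (div_le_one hT).mpr hqT
  · simp_rw [Real.sqrt_div' _ hT.le, div_div_div_cancel_right₀ (Real.sqrt_pos.mpr hT).ne']
    exact hasModularLE_sqrt_div_of_orliczNorm_one_lt hr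
      (stronglyMeasurable_condExp.mono (ℱ.le k)).aestronglyMeasurable (hq k hk)

lemma orliczNorm_sum_sq_le_of_abs_le (hDm : AEStronglyMeasurable D μ)
    (hle : ∀ᵐ ω ∂μ, ∀ k < n, |e k ω| ≤ |D ω|) :
    orliczNorm μ 2 r (fun ω => ∑ k ∈ Finset.range n, e k ω) ^ 2
      ≤ ENNReal.ofReal (rosenthalConst r) * (orliczNorm μ 2 r D ^ 2
        + ∑ k ∈ Finset.range n, orliczNorm μ 1 r (μ[fun ω => e k ω ^ 2 | ℱ k])) := by
  refine le_ofReal_mul_sq_add_sum_of_forall_lt (zero_lt_one.trans_le (one_le_rosenthalConst hr))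
    fun p q hp hq => ?_
  have hp0 : 0 < p := ENNReal.ofReal_pos.mp (bot_le.trans_lt hp)
  have hq0 : 0 ≤ ∑ k ∈ Finset.range n, q k := Finset.sum_nonneg fun k hk =>
    (ENNReal.ofReal_pos.mp (bot_le.trans_lt (hq k (Finset.mem_range.mp hk)))).le
  exact he.orliczNorm_sum_sq_le_of_abs_le_of_lt hr (by positivity) hDm hle hp hq
    (le_add_of_nonneg_right hq0) (le_add_of_nonneg_left (sq_nonneg p))

end IsMartingaleDiff

end Inequalities

lemma le_rpow_half_mul_add_of_sq_le {x c a b : ℝ≥0∞} (h : x ^ 2 ≤ c * (a ^ 2 + b)) :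
    x ≤ c ^ (1 / 2 : ℝ) * a + c ^ (1 / 2 : ℝ) * b ^ (1 / 2 : ℝ) := by
  have hsqrt : ∀ y : ℝ≥0∞, (y ^ 2) ^ (1 / 2 : ℝ) = y := fun y => by
    rw [← ENNReal.rpow_natCast, ← ENNReal.rpow_mul]
    norm_num
  calc x = (x ^ 2) ^ (1 / 2 : ℝ) := (hsqrt x).symm
    _ ≤ (c * (a ^ 2 + b)) ^ (1 / 2 : ℝ) := by gcongr
    _ = c ^ (1 / 2 : ℝ) * (a ^ 2 + b) ^ (1 / 2 : ℝ) := ENNReal.mul_rpow_of_nonneg _ _ (by norm_num)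
    _ ≤ c ^ (1 / 2 : ℝ) * ((a ^ 2) ^ (1 / 2 : ℝ) + b ^ (1 / 2 : ℝ)) := by
        gcongr
        exact ENNReal.rpow_add_le_add_rpow _ _ (by norm_num) (by norm_num)
    _ = _ := by rw [hsqrt, mul_add]

lemma sum_Icc_one_eq_sum_range {M : Type*} [AddCommMonoid M] (f : ℕ → M) (n : ℕ) :
    ∑ k ∈ Finset.Icc 1 n, f k = ∑ k ∈ Finset.range n, f (k + 1) := by
  rw [Finset.range_eq_Ico, Finset.sum_Ico_add' f 0 n 1]
  rfl

theorem burkholder_orlicz_general (r : ℝ) (hr : 0 ≤ r) :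
    ∃ C K : ℝ≥0∞, C ≠ ⊤ ∧ K ≠ ⊤ ∧
      ∀ (Ω : Type*) (mΩ : MeasurableSpace Ω) (μ : Measure Ω) (ℱ : Filtration ℕ mΩ),
        SigmaFiniteFiltration μ ℱ →
        ∀ (n : ℕ) (hn : 1 ≤ n) (d : ℕ → Ω → ℝ),
        (∀ k, 1 ≤ k → k ≤ n → StronglyMeasurable[ℱ k] (d k)) →
        (∀ k, 1 ≤ k → k ≤ n → Integrable (d k) μ) →
        (∀ k, 1 ≤ k → k ≤ n → μ[d k | ℱ (k - 1)] =ᵐ[μ] 0) →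
        (orliczNorm μ 2 r (fun ω => ∑ k ∈ Finset.Icc 1 n, d k ω) ≤
            C * orliczNorm μ 2 r
              (fun ω => (Finset.Icc 1 n).sup' (Finset.nonempty_Icc.mpr hn)
                fun k => |d k ω|) +
            C * (∑ k ∈ Finset.Icc 1 n,
                orliczNorm μ 1 r (μ[fun ω => (d k ω) ^ 2 | ℱ (k - 1)])) ^ ((1 : ℝ) / 2)) ∧
        (orliczNorm μ 2 r (fun ω => ∑ k ∈ Finset.Icc 1 n, d k ω)) ^ (2 : ℝ) ≤
            K * ∑ k ∈ Finset.Icc 1 n, (orliczNorm μ 2 r (d k)) ^ (2 : ℝ) := by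
  refine ⟨ENNReal.ofReal (rosenthalConst r) ^ (1 / 2 : ℝ), ENNReal.ofReal (burkholderConst r),
    ENNReal.rpow_ne_top_of_nonneg (by norm_num) ENNReal.ofReal_ne_top, ENNReal.ofReal_ne_top,
    fun Ω mΩ μ ℱ _ n hn d hd hint hzero => ?_⟩
  have he : IsMartingaleDiff ℱ μ n fun k => d (k + 1) :=
    ⟨fun k hk => hd _ k.succ_pos hk, fun k hk => hint _ k.succ_pos hk,
      fun k hk => hzero _ k.succ_pos hk⟩
  set D : Ω → ℝ := fun ω => (Finset.Icc 1 n).sup' (Finset.nonempty_Icc.mpr hn) fun k => |d k ω|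
  have hDm : Measurable D := by
    simp_rw [D, ← Finset.sup'_apply _ fun k ω => |d k ω|]
    refine Finset.measurable_sup' _ fun k hk => ?_
    obtain ⟨h1, hkn⟩ := Finset.mem_Icc.mp hk
    exact ((hd k h1 hkn).mono (ℱ.le k)).measurable.abs
  have hle : ∀ ω, ∀ k < n, |d (k + 1) ω| ≤ |D ω| := fun ω k hk =>
    (Finset.le_sup' (fun k => |d k ω|) (Finset.mem_Icc.mpr ⟨k.succ_pos, hk⟩)).trans (le_abs_self _)
  simp only [sum_Icc_one_eq_sum_range, Nat.add_sub_cancel, ENNReal.rpow_two]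
  exact ⟨le_rpow_half_mul_add_of_sq_le
    (he.orliczNorm_sum_sq_le_of_abs_le hr hDm.aestronglyMeasurable (.of_forall hle)),
    he.orliczNorm_sum_sq_le hr⟩

/-- Burkholder- and Rosenthal-type inequalities in the Orlicz spaces `𝕃_{2,r}` for martingale
difference sequences. -/
theorem burkholder_orlicz (r : ℝ) (hr : 0 ≤ r) :
    ∃ C K : ℝ≥0∞, C ≠ ⊤ ∧ K ≠ ⊤ ∧
      ∀ (Ω : Type*) (mΩ : MeasurableSpace Ω) (μ : Measure Ω),
        IsProbabilityMeasure μ →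
        ∀ (n : ℕ) (hn : 1 ≤ n) (ℱ : ℕ → MeasurableSpace Ω) (d : ℕ → Ω → ℝ),
        (∀ k, ℱ k ≤ mΩ) →
        Monotone ℱ →
        (∀ k, 1 ≤ k → k ≤ n → StronglyMeasurable[ℱ k] (d k)) →
        (∀ k, 1 ≤ k → k ≤ n → Integrable (d k) μ) →
        (∀ k, 1 ≤ k → k ≤ n → μ[d k | ℱ (k - 1)] =ᵐ[μ] 0) →
        (orliczNorm μ 2 r (fun ω => ∑ k ∈ Finset.Icc 1 n, d k ω) ≤
            C * orliczNorm μ 2 r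
              (fun ω => (Finset.Icc 1 n).sup' (Finset.nonempty_Icc.mpr hn)
                fun k => |d k ω|) +
            C * (∑ k ∈ Finset.Icc 1 n,
                orliczNorm μ 1 r (μ[fun ω => (d k ω) ^ 2 | ℱ (k - 1)])) ^ ((1 : ℝ) / 2)) ∧
        (orliczNorm μ 2 r (fun ω => ∑ k ∈ Finset.Icc 1 n, d k ω)) ^ (2 : ℝ) ≤
            K * ∑ k ∈ Finset.Icc 1 n, (orliczNorm μ 2 r (d k)) ^ (2 : ℝ) := by
  obtain ⟨C, K, hC, hK, h⟩ := burkholder_orlicz_general r hr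
  exact ⟨C, K, hC, hK, fun Ω mΩ μ _ n hn ℱ d hℱ hmono =>
    h Ω mΩ μ ⟨ℱ, hmono, hℱ⟩ inferInstance n hn d⟩
end
end

section
/- For all p > 1 and r ≥ 0 there exists a constant c_{p,r} such that whenever X and Y are two nonnegative random variables satisfying x·P(X > x) ≤ E[Y·1{X ≥ x}] for every positive x, one has ‖X‖_{p,r} ≤ c_{p,r} ‖Y‖_{p,r}. -/
open MeasureTheory ENNReal

noncomputable section

/-!
Write a gauge as `φ(x) = x ^ p * L x` with `L ≥ 0` nondecreasing. Splitting `Y` at height `x / 2`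
in the weak-type inequality and absorbing the lower part gives
`(x / 2) P(X > x) ≤ E[Y 1{2 Y > x}]` for almost every `x`. Integrating this against
`2 φ(x) / x ^ 2 dx`, the left side dominates `E φ(X / 2)`, because `∫₀^x φ(t) / t dt ≥ φ(x / 2)`,
and since `p > 1` the right side is at most `E φ(2 Y) / (p - 1)`, because
`∫₀^{2y} φ(t) / t ^ 2 dt ≤ L(2y) ∫₀^{2y} t ^ (p - 2) dt`. The factor `1 / (p - 1)` is absorbed
into the norm through `φ(x / c) ≤ φ(x) / c`. In particular the constant does not depend on `L`.
-/

section PowerTimesMonotone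

variable {p s x c : ℝ} {L : ℝ → ℝ}

lemma nonneg_of_monotoneOn_Ici (hL : MonotoneOn L (Set.Ici 0)) (hL0 : 0 ≤ L 0) (hx : 0 ≤ x) :
    0 ≤ L x :=
  hL0.trans (hL Set.self_mem_Ici hx hx)

lemma intervalIntegrable_rpow_mul_of_monotoneOn (hs : -1 < s) (hL : MonotoneOn L (Set.Ici 0))
    (hL0 : 0 ≤ L 0) (hx : 0 ≤ x) : IntervalIntegrable (fun t => t ^ s * L t) volume 0 x := by
  have hpow : IntervalIntegrable (fun t : ℝ => t ^ s) volume 0 x :=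
    intervalIntegral.intervalIntegrable_rpow' hs
  have hL_Ioc : MonotoneOn L (Set.Ioc 0 x) := hL.mono fun t ht => ht.1.le
  rw [intervalIntegrable_iff_integrableOn_Ioc_of_le hx] at hpow ⊢
  refine hpow.mul_bdd (c := L x)
    (aemeasurable_restrict_of_monotoneOn measurableSet_Ioc hL_Ioc).aestronglyMeasurable ?_
  filter_upwards [ae_restrict_mem measurableSet_Ioc] with t ht
  rw [Real.norm_of_nonneg (nonneg_of_monotoneOn_Ici hL hL0 ht.1.le)]
  exact hL ht.1.le hx ht.2

lemma integral_rpow_mul_le_of_monotoneOn (hs : -1 < s) (hL : MonotoneOn L (Set.Ici 0))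
    (hL0 : 0 ≤ L 0) (hx : 0 ≤ x) :
    ∫ t in 0..x, t ^ s * L t ≤ x ^ (s + 1) / (s + 1) * L x := by
  calc ∫ t in 0..x, t ^ s * L t
      ≤ ∫ t in 0..x, t ^ s * L x := by
        refine intervalIntegral.integral_mono_on hx
          (intervalIntegrable_rpow_mul_of_monotoneOn hs hL hL0 hx)
          ((intervalIntegral.intervalIntegrable_rpow' hs).mul_const _) fun t ht => ?_
        exact mul_le_mul_of_nonneg_left (hL ht.1 hx ht.2) (Real.rpow_nonneg ht.1 s)
    _ = x ^ (s + 1) / (s + 1) * L x := by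
        rw [intervalIntegral.integral_mul_const, integral_rpow (.inl hs),
          Real.zero_rpow (by linarith), sub_zero]

lemma half_rpow_mul_le_integral_of_monotoneOn (hs : 0 ≤ s) (hL : MonotoneOn L (Set.Ici 0))
    (hL0 : 0 ≤ L 0) (hx : 0 ≤ x) :
    (x / 2) ^ (s + 1) * L (x / 2) ≤ ∫ t in 0..x, t ^ s * L t := by
  have hx2 : 0 ≤ x / 2 := by positivity
  have hint := intervalIntegrable_rpow_mul_of_monotoneOn (s := s) (by linarith) hL hL0 hx
  calc (x / 2) ^ (s + 1) * L (x / 2)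
      = ∫ _ in (x / 2)..x, (x / 2) ^ s * L (x / 2) := by
        rw [intervalIntegral.integral_const, smul_eq_mul,
          Real.rpow_add_one' hx2 (by linarith)]
        ring
    _ ≤ ∫ t in (x / 2)..x, t ^ s * L t := by
        refine intervalIntegral.integral_mono_on (by linarith) intervalIntegrable_const
          (hint.mono_set ?_) fun t ht => ?_
        · rw [Set.uIcc_of_le hx, Set.uIcc_of_le (by linarith)]
          exact Set.Icc_subset_Icc_left hx2
        · exact mul_le_mul (Real.rpow_le_rpow hx2 ht.1 hs) (hL hx2 (hx2.trans ht.1) ht.1)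
            (nonneg_of_monotoneOn_Ici hL hL0 hx2) (Real.rpow_nonneg (hx2.trans ht.1) s)
    _ ≤ ∫ t in 0..x, t ^ s * L t := by
        refine intervalIntegral.integral_mono_interval hx2 (by linarith) le_rfl ?_ hint
        filter_upwards [ae_restrict_mem measurableSet_Ioc] with t ht
        exact mul_nonneg (Real.rpow_nonneg ht.1.le s) (nonneg_of_monotoneOn_Ici hL hL0 ht.1.le)

lemma half_rpow_mul_le_integral_mul_rpow_sub_two (hp : 1 < p) (hL : MonotoneOn L (Set.Ici 0))
    (hL0 : 0 ≤ L 0) (hx : 0 ≤ x) :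
    (x / 2) ^ p * L (x / 2) ≤ ∫ t in 0..x, t * (t ^ (p - 2) * L t) := by
  have hmul : Set.EqOn (fun t => t * (t ^ (p - 2) * L t)) (fun t => t ^ (p - 1) * L t)
      (Set.uIcc 0 x) := by
    intro t ht
    rw [Set.uIcc_of_le hx] at ht
    simp only
    rw [← mul_assoc, mul_comm t, ← Real.rpow_add_one' ht.1 (by linarith)]
    ring_nf
  rw [intervalIntegral.integral_congr hmul]
  simpa only [sub_add_cancel] using
    half_rpow_mul_le_integral_of_monotoneOn (s := p - 1) (by linarith) hL hL0 hx

lemma mul_integral_rpow_sub_two_mul_le (hp : 1 < p) (hL : MonotoneOn L (Set.Ici 0))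
    (hL0 : 0 ≤ L 0) (hx : 0 ≤ x) :
    x * ∫ t in 0..x, t ^ (p - 2) * L t ≤ (p - 1)⁻¹ * (x ^ p * L x) := by
  have hbound := integral_rpow_mul_le_of_monotoneOn (s := p - 2) (by linarith) hL hL0 hx
  have hpow : x ^ p = x ^ (p - 1) * x := by
    rw [← Real.rpow_add_one' hx (by linarith), sub_add_cancel]
  rw [show p - 2 + 1 = p - 1 by ring] at hbound
  calc x * ∫ t in 0..x, t ^ (p - 2) * L t
      ≤ x * (x ^ (p - 1) / (p - 1) * L x) := by gcongr
    _ = (p - 1)⁻¹ * (x ^ p * L x) := by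
      rw [hpow]
      ring

lemma div_rpow_mul_le_of_monotoneOn (hp : 1 ≤ p) (hL : MonotoneOn L (Set.Ici 0))
    (hL0 : 0 ≤ L 0) (hx : 0 ≤ x) (hc : 1 ≤ c) :
    (x / c) ^ p * L (x / c) ≤ c⁻¹ * (x ^ p * L x) := by
  have hc0 : 0 < c := by linarith
  have hxc : 0 ≤ x / c := by positivity
  have hpow : (x / c) ^ p ≤ c⁻¹ * x ^ p := by
    rw [Real.div_rpow hx hc0.le, div_eq_inv_mul]
    gcongr
    exact Real.self_le_rpow_of_one_le hc hp
  rw [← mul_assoc]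
  exact mul_le_mul hpow (hL hxc hx (div_le_self hx hc)) (nonneg_of_monotoneOn_Ici hL hL0 hxc)
    (by positivity)

end PowerTimesMonotone

section WeakType

variable {Ω : Type*} [MeasurableSpace Ω] {μ : Measure Ω} {X Y : Ω → ℝ}

/-- The weak-type hypothesis `x P(X > x) ≤ E[Y 1{X ≥ x}]` for all `x > 0`, as satisfied by a
maximal function `X` of `Y`. The expectation is a lower integral, so it is allowed to be infinite
and only sees the positive part of `Y`. -/
def WeakTypeBound (μ : Measure Ω) (X Y : Ω → ℝ) : Prop :=
  ∀ x : ℝ, 0 < x → ENNReal.ofReal x * μ {ω | x < X ω} ≤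
    ∫⁻ ω in {ω | x ≤ X ω}, ENNReal.ofReal (Y ω) ∂μ

lemma WeakTypeBound.div_const (h : WeakTypeBound μ X Y) {a : ℝ} (ha : 0 < a) :
    WeakTypeBound μ (fun ω => X ω / a) (fun ω => Y ω / a) := by
  intro x hx
  simp only [lt_div_iff₀ ha, le_div_iff₀ ha, div_eq_inv_mul (Y _),
    ENNReal.ofReal_mul (inv_nonneg.2 ha.le)]
  calc ENNReal.ofReal x * μ {ω | x * a < X ω}
      = ENNReal.ofReal a⁻¹ * (ENNReal.ofReal (x * a) * μ {ω | x * a < X ω}) := by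
        rw [← mul_assoc, ← ENNReal.ofReal_mul (by positivity)]
        congr 2
        field_simp
    _ ≤ ENNReal.ofReal a⁻¹ * ∫⁻ ω in {ω | x * a ≤ X ω}, ENNReal.ofReal (Y ω) ∂μ := by
        gcongr
        exact h (x * a) (by positivity)
    _ = _ := (lintegral_const_mul' _ _ ENNReal.ofReal_ne_top).symm

lemma setLIntegral_ofReal_le_add_half (s : Set Ω) (x : ℝ) :
    ∫⁻ ω in s, ENNReal.ofReal (Y ω) ∂μ ≤
      (∫⁻ ω in {ω | x < 2 * Y ω}, ENNReal.ofReal (Y ω) ∂μ) + ENNReal.ofReal (x / 2) * μ s := by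
  calc ∫⁻ ω in s, ENNReal.ofReal (Y ω) ∂μ
      ≤ ∫⁻ ω in s, ({ω | x < 2 * Y ω}.indicator (fun ω => ENNReal.ofReal (Y ω)) ω +
          ENNReal.ofReal (x / 2)) ∂μ := by
        refine lintegral_mono fun ω => ?_
        by_cases hω : x < 2 * Y ω
        · rw [Set.indicator_of_mem (s := {ω | x < 2 * Y ω}) hω]
          exact le_self_add
        · rw [Set.indicator_of_notMem (s := {ω | x < 2 * Y ω}) hω, zero_add]
          exact ENNReal.ofReal_le_ofReal (by linarith)
    _ = (∫⁻ ω in s, {ω | x < 2 * Y ω}.indicator (fun ω => ENNReal.ofReal (Y ω)) ω ∂μ) +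
          ENNReal.ofReal (x / 2) * μ s := by
        rw [lintegral_add_right _ measurable_const, setLIntegral_const]
    _ ≤ _ := by
        refine add_le_add_left ?_ _
        exact (setLIntegral_le_lintegral _ _).trans (lintegral_indicator_le _ _)

lemma WeakTypeBound.half_mul_measure_le [IsFiniteMeasure μ] (h : WeakTypeBound μ X Y) {x : ℝ}
    (hx : 0 < x) (hXx : μ {ω | x ≤ X ω} = μ {ω | x < X ω}) :
    ENNReal.ofReal (x / 2) * μ {ω | x < X ω} ≤
      ∫⁻ ω in {ω | x < 2 * Y ω}, ENNReal.ofReal (Y ω) ∂μ := by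
  have hsplit : ENNReal.ofReal (x / 2) * μ {ω | x < X ω} +
      ENNReal.ofReal (x / 2) * μ {ω | x < X ω} ≤
        (∫⁻ ω in {ω | x < 2 * Y ω}, ENNReal.ofReal (Y ω) ∂μ) +
          ENNReal.ofReal (x / 2) * μ {ω | x < X ω} := by
    rw [← add_mul, ← ENNReal.ofReal_add (by positivity) (by positivity), add_halves]
    exact (h x hx).trans (hXx ▸ setLIntegral_ofReal_le_add_half _ x)
  exact (ENNReal.add_le_add_iff_right
    (ENNReal.mul_ne_top ENNReal.ofReal_ne_top (measure_ne_top _ _))).1 hsplit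

lemma lintegral_mul_primitive_eq [SFinite μ] {f : Ω → ℝ≥0∞} {Z : Ω → ℝ} {w : ℝ → ℝ}
    (hf : AEMeasurable f μ) (hf_top : ∀ᵐ ω ∂μ, f ω < ⊤) (hZ : AEMeasurable Z μ) (hZ0 : 0 ≤ᵐ[μ] Z)
    (hw : ∀ t > 0, 0 ≤ w t) (hw_int : ∀ t > 0, IntervalIntegrable w volume 0 t) :
    ∫⁻ ω, f ω * ENNReal.ofReal (∫ t in 0..Z ω, w t) ∂μ =
      ∫⁻ t in Set.Ioi 0, (∫⁻ ω in {ω | t < Z ω}, f ω ∂μ) * ENNReal.ofReal (w t) := by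
  have hac := withDensity_absolutelyContinuous μ f
  have hcake := lintegral_comp_eq_lintegral_meas_lt_mul (μ.withDensity f) (hac.ae_le hZ0)
    (hZ.mono_ac hac) hw_int ((ae_restrict_iff' measurableSet_Ioi).2 (.of_forall hw))
  simpa only [lintegral_withDensity_eq_lintegral_mul_non_measurable₀ μ hf hf_top, Pi.mul_apply,
    withDensity_apply'] using hcake

lemma WeakTypeBound.lintegral_primitive_le [IsFiniteMeasure μ] (h : WeakTypeBound μ X Y)
    (hX : AEMeasurable X μ) (hY : AEMeasurable Y μ) (hX0 : 0 ≤ᵐ[μ] X) (hY0 : 0 ≤ᵐ[μ] Y) {w : ℝ → ℝ}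
    (hw : ∀ t > 0, 0 ≤ w t) (hw_int : ∀ t > 0, IntervalIntegrable w volume 0 t) :
    ∫⁻ ω, ENNReal.ofReal (∫ t in 0..X ω, t * w t) ∂μ ≤
      2 * ∫⁻ ω, ENNReal.ofReal (Y ω) * ENNReal.ofReal (∫ t in 0..2 * Y ω, w t) ∂μ := by
  have htw_nonneg : ∀ᵐ t ∂volume.restrict (Set.Ioi 0), 0 ≤ t * w t := by
    filter_upwards [ae_restrict_mem measurableSet_Ioi] with t ht
    exact mul_nonneg ht.le (hw t ht)
  have h2Y0 : 0 ≤ᵐ[μ] fun ω => 2 * Y ω := hY0.mono fun ω hω => mul_nonneg zero_le_two hω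
  rw [lintegral_comp_eq_lintegral_meas_lt_mul μ hX0 hX
      (g := fun t => t * w t) (fun t ht => (hw_int t ht).continuousOn_mul continuousOn_id)
      htw_nonneg,
    lintegral_mul_primitive_eq hY.ennreal_ofReal (.of_forall fun _ => ENNReal.ofReal_lt_top)
      (hY.const_mul 2) h2Y0 hw hw_int,
    ← lintegral_const_mul' _ _ ENNReal.ofNat_ne_top]
  refine lintegral_mono_ae ?_
  filter_upwards [ae_restrict_mem measurableSet_Ioi,
    meas_le_ae_eq_meas_lt μ (volume.restrict (Set.Ioi 0)) X] with t ht hXt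
  have ht : 0 < t := ht
  have hhalf : ENNReal.ofReal t = 2 * ENNReal.ofReal (t / 2) := by
    rw [← ENNReal.ofReal_ofNat 2, ← ENNReal.ofReal_mul zero_le_two, mul_div_cancel₀ t two_ne_zero]
  calc μ {ω | t < X ω} * ENNReal.ofReal (t * w t)
      = 2 * ((ENNReal.ofReal (t / 2) * μ {ω | t < X ω}) * ENNReal.ofReal (w t)) := by
        rw [ENNReal.ofReal_mul ht.le, hhalf]
        ring
    _ ≤ _ := by
        gcongr
        exact h.half_mul_measure_le ht hXt

lemma WeakTypeBound.lintegral_rpow_mul_half_le [IsFiniteMeasure μ] (h : WeakTypeBound μ X Y)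
    (hX : AEMeasurable X μ) (hY : AEMeasurable Y μ) (hX0 : 0 ≤ᵐ[μ] X) (hY0 : 0 ≤ᵐ[μ] Y)
    {p : ℝ} (hp : 1 < p) {L : ℝ → ℝ} (hL : MonotoneOn L (Set.Ici 0)) (hL0 : 0 ≤ L 0) :
    ∫⁻ ω, ENNReal.ofReal ((X ω / 2) ^ p * L (X ω / 2)) ∂μ ≤
      ENNReal.ofReal (p - 1)⁻¹ * ∫⁻ ω, ENNReal.ofReal ((2 * Y ω) ^ p * L (2 * Y ω)) ∂μ := by
  have hw_int : ∀ t > 0, IntervalIntegrable (fun u => u ^ (p - 2) * L u) volume 0 t := fun t ht =>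
    intervalIntegrable_rpow_mul_of_monotoneOn (by linarith) hL hL0 (le_of_lt ht)
  have hw : ∀ t > 0, 0 ≤ t ^ (p - 2) * L t := fun t ht =>
    mul_nonneg (Real.rpow_nonneg (le_of_lt ht) _) (nonneg_of_monotoneOn_Ici hL hL0 (le_of_lt ht))
  calc ∫⁻ ω, ENNReal.ofReal ((X ω / 2) ^ p * L (X ω / 2)) ∂μ
      ≤ ∫⁻ ω, ENNReal.ofReal (∫ t in 0..X ω, t * (t ^ (p - 2) * L t)) ∂μ :=
        lintegral_mono_ae <| hX0.mono fun ω hω =>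
          ENNReal.ofReal_le_ofReal (half_rpow_mul_le_integral_mul_rpow_sub_two hp hL hL0 hω)
    _ ≤ 2 * ∫⁻ ω, ENNReal.ofReal (Y ω) *
          ENNReal.ofReal (∫ t in 0..2 * Y ω, t ^ (p - 2) * L t) ∂μ :=
        h.lintegral_primitive_le hX hY hX0 hY0 hw hw_int
    _ = ∫⁻ ω, 2 * (ENNReal.ofReal (Y ω) *
          ENNReal.ofReal (∫ t in 0..2 * Y ω, t ^ (p - 2) * L t)) ∂μ :=
        (lintegral_const_mul' _ _ ENNReal.ofNat_ne_top).symm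
    _ ≤ ∫⁻ ω, ENNReal.ofReal (p - 1)⁻¹ *
          ENNReal.ofReal ((2 * Y ω) ^ p * L (2 * Y ω)) ∂μ := by
        refine lintegral_mono_ae (hY0.mono fun ω (hω : 0 ≤ Y ω) => ?_)
        have h2 : 0 ≤ 2 * Y ω := by positivity
        rw [← ENNReal.ofReal_mul (inv_nonneg.2 (by linarith)), ← mul_assoc,
          ← ENNReal.ofReal_ofNat 2, ← ENNReal.ofReal_mul zero_le_two, ← ENNReal.ofReal_mul h2]
        exact ENNReal.ofReal_le_ofReal (mul_integral_rpow_sub_two_mul_le hp hL hL0 h2)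
    _ = _ := lintegral_const_mul' _ _ ENNReal.ofReal_ne_top

lemma WeakTypeBound.lintegral_rpow_mul_div_le [IsFiniteMeasure μ] (h : WeakTypeBound μ X Y)
    (hX : AEMeasurable X μ) (hY : AEMeasurable Y μ) (hX0 : 0 ≤ᵐ[μ] X) (hY0 : 0 ≤ᵐ[μ] Y)
    {p : ℝ} (hp : 1 < p) {L : ℝ → ℝ} (hL : MonotoneOn L (Set.Ici 0)) (hL0 : 0 ≤ L 0) :
    ∫⁻ ω, ENNReal.ofReal ((X ω / (4 * max 1 (p - 1)⁻¹)) ^ p *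
        L (X ω / (4 * max 1 (p - 1)⁻¹))) ∂μ ≤
      ∫⁻ ω, ENNReal.ofReal (Y ω ^ p * L (Y ω)) ∂μ := by
  set c : ℝ := max 1 (p - 1)⁻¹
  have hc : 1 ≤ c := le_max_left _ _
  have hc0 : 0 < c := by linarith
  have hmodular := (h.div_const two_pos).lintegral_rpow_mul_half_le (hX.div_const 2)
    (hY.div_const 2)
    (hX0.mono fun ω hω => div_nonneg hω zero_le_two)
    (hY0.mono fun ω hω => div_nonneg hω zero_le_two) hp hL hL0
  simp only [mul_div_cancel₀ _ (two_ne_zero' ℝ)] at hmodular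
  calc ∫⁻ ω, ENNReal.ofReal ((X ω / (4 * c)) ^ p * L (X ω / (4 * c))) ∂μ
      ≤ ∫⁻ ω, ENNReal.ofReal c⁻¹ *
          ENNReal.ofReal ((X ω / 2 / 2) ^ p * L (X ω / 2 / 2)) ∂μ := by
        refine lintegral_mono_ae (hX0.mono fun ω (hω : 0 ≤ X ω) => ?_)
        have hscale : X ω / (4 * c) = X ω / 2 / 2 / c := by ring
        rw [← ENNReal.ofReal_mul (by positivity), hscale]
        exact ENNReal.ofReal_le_ofReal
          (div_rpow_mul_le_of_monotoneOn hp.le hL hL0 (by positivity) hc)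
    _ = ENNReal.ofReal c⁻¹ * ∫⁻ ω, ENNReal.ofReal ((X ω / 2 / 2) ^ p * L (X ω / 2 / 2)) ∂μ :=
        lintegral_const_mul' _ _ ENNReal.ofReal_ne_top
    _ ≤ ENNReal.ofReal c⁻¹ *
          (ENNReal.ofReal c * ∫⁻ ω, ENNReal.ofReal (Y ω ^ p * L (Y ω)) ∂μ) := by
        gcongr
        exact hmodular.trans (mul_le_mul_left (ENNReal.ofReal_le_ofReal (le_max_right _ _)) _)
    _ = _ := by
        rw [← mul_assoc, ← ENNReal.ofReal_mul (by positivity), inv_mul_cancel₀ hc0.ne',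
          ENNReal.ofReal_one, one_mul]

end WeakType

section LuxemburgNorm

variable {Ω : Type*} [MeasurableSpace Ω] {μ : Measure Ω} {X Y : Ω → ℝ}

/-- The Luxemburg norm of `X` for an arbitrary gauge `φ`, of which `orliczNorm μ p r` is the case
`φ = phiYoung p r`. It is `⊤` when no finite scale is admissible. -/
def luxemburgNorm (μ : Measure Ω) (φ : ℝ → ℝ) (X : Ω → ℝ) : ℝ≥0∞ :=
  sInf {l : ℝ≥0∞ | 0 < l ∧ l < ⊤ ∧ ∫⁻ ω, ENNReal.ofReal (φ (|X ω| / l.toReal)) ∂μ ≤ 1}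

lemma luxemburgNorm_le_mul {φ : ℝ → ℝ} {c : ℝ} (hc : 0 < c)
    (h : ∀ l : ℝ, 0 < l → ∫⁻ ω, ENNReal.ofReal (φ (|Y ω| / l)) ∂μ ≤ 1 →
      ∫⁻ ω, ENNReal.ofReal (φ (|X ω| / (c * l))) ∂μ ≤ 1) :
    luxemburgNorm μ φ X ≤ ENNReal.ofReal c * luxemburgNorm μ φ Y := by
  have hc0 : ENNReal.ofReal c ≠ 0 := (ENNReal.ofReal_pos.2 hc).ne'
  rw [← ENNReal.div_le_iff' hc0 ENNReal.ofReal_ne_top]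
  refine le_sInf fun l ⟨hl0, hl_top, hl⟩ => ?_
  rw [ENNReal.div_le_iff' hc0 ENNReal.ofReal_ne_top]
  refine sInf_le ⟨ENNReal.mul_pos hc0 hl0.ne', ENNReal.mul_lt_top ENNReal.ofReal_lt_top hl_top, ?_⟩
  rw [ENNReal.toReal_mul, ENNReal.toReal_ofReal hc.le]
  exact h l.toReal (ENNReal.toReal_pos hl0.ne' hl_top.ne) hl

theorem orlicz_norm_of_weak_type_general [IsFiniteMeasure μ] {p : ℝ} (hp : 1 < p) {L : ℝ → ℝ}
    (hL : MonotoneOn L (Set.Ici 0)) (hL0 : 0 ≤ L 0) (hX : AEMeasurable X μ)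
    (hY : AEMeasurable Y μ) (hX0 : 0 ≤ᵐ[μ] X) (hY0 : 0 ≤ᵐ[μ] Y) (h : WeakTypeBound μ X Y) :
    luxemburgNorm μ (fun x => x ^ p * L x) X ≤
      ENNReal.ofReal (4 * max 1 (p - 1)⁻¹) * luxemburgNorm μ (fun x => x ^ p * L x) Y := by
  refine luxemburgNorm_le_mul (by positivity) fun l hl hYl => ?_
  have hX_div : 0 ≤ᵐ[μ] fun ω => X ω / l := hX0.mono fun ω hω => div_nonneg hω hl.le
  have hY_div : 0 ≤ᵐ[μ] fun ω => Y ω / l := hY0.mono fun ω hω => div_nonneg hω hl.le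
  calc ∫⁻ ω, ENNReal.ofReal ((|X ω| / (4 * max 1 (p - 1)⁻¹ * l)) ^ p *
        L (|X ω| / (4 * max 1 (p - 1)⁻¹ * l))) ∂μ
      = ∫⁻ ω, ENNReal.ofReal ((X ω / l / (4 * max 1 (p - 1)⁻¹)) ^ p *
        L (X ω / l / (4 * max 1 (p - 1)⁻¹))) ∂μ := by
        refine lintegral_congr_ae (hX0.mono fun ω (hω : 0 ≤ X ω) => ?_)
        simp only [abs_of_nonneg hω, div_div, mul_comm l]
    _ ≤ ∫⁻ ω, ENNReal.ofReal ((Y ω / l) ^ p * L (Y ω / l)) ∂μ :=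
        (h.div_const hl).lintegral_rpow_mul_div_le (hX.div_const l) (hY.div_const l) hX_div hY_div
          hp hL hL0
    _ = ∫⁻ ω, ENNReal.ofReal ((|Y ω| / l) ^ p * L (|Y ω| / l)) ∂μ := by
        refine lintegral_congr_ae (hY0.mono fun ω (hω : 0 ≤ Y ω) => ?_)
        simp only [abs_of_nonneg hω]
    _ ≤ 1 := hYl

end LuxemburgNorm

lemma monotoneOn_one_add_log_one_add_rpow {r : ℝ} (hr : 0 ≤ r) :
    MonotoneOn (fun x => (1 + Real.log (1 + x)) ^ r) (Set.Ici 0) := by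
  intro x (hx : 0 ≤ x) y _ hxy
  have hlog : 0 ≤ Real.log (1 + x) := Real.log_nonneg (by linarith)
  simp only
  gcongr

/-- From a weak-type inequality to a comparison of Orlicz norms: if
`x P(X > x) ≤ E[Y 1_{X ≥ x}]` for all `x > 0`, then `‖X‖_{p,r} ≤ c_{p,r} ‖Y‖_{p,r}`. -/
theorem orlicz_norm_of_weak_type (p r : ℝ) (hp : 1 < p) (hr : 0 ≤ r) :
    ∃ c : ℝ≥0∞, c ≠ ⊤ ∧
      ∀ (Ω : Type*) (mΩ : MeasurableSpace Ω) (μ : Measure Ω),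
        IsProbabilityMeasure μ →
        ∀ X Y : Ω → ℝ, Measurable X → Measurable Y →
        (∀ ω, 0 ≤ X ω) → (∀ ω, 0 ≤ Y ω) →
        (∀ x : ℝ, 0 < x →
          ENNReal.ofReal x * μ {ω | x < X ω} ≤
            ∫⁻ ω in {ω | x ≤ X ω}, ENNReal.ofReal (Y ω) ∂μ) →
        orliczNorm μ p r X ≤ c * orliczNorm μ p r Y := by
  exact ⟨ENNReal.ofReal (4 * max 1 (p - 1)⁻¹), ENNReal.ofReal_ne_top,
    fun Ω _ μ _ X Y hX hY hX0 hY0 h => orlicz_norm_of_weak_type_general hp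
      (monotoneOn_one_add_log_one_add_rpow hr) (by simp) hX.aemeasurable hY.aemeasurable
      (.of_forall hX0) (.of_forall hY0) h⟩
end
end
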